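/- arXiv:0907.0477 — 4 statements merged into one kernel-verified Lean document; each statement's English description precedes it below -/
import Mathlib

section
/- Let G = (V,E) be a finite simple graph with edge weights λ: E → [0,1] and node weights μ: V → [0,1], and let i ∈ V have neighbors j1, j2, …, jd with d = deg(i) ≥ 2. Construct G' = (V',E') with V' = (V \ {i}) ∪ {i1,i2} and E' consisting of: all edges of E not incident to i, the edge {i1,i2}, the edges {i1,j1} and {i1,j2}, and the edges {i2,jk} for k = 3,…,d. Let φ: E → E' be the injection fixing edges not incident to i and sending {i,j1} ↦ {i1,j1}, {i,j2} ↦ {i1,j2}, and {i,jk} ↦ {i2,jk} for k ≥ 3. Define λ'(φ(e)) = λ(e) for e ∈ E, λ'({i1,i2}) = 1, μ'(v) = μ(v) for v ∈ V \ {i}, and μ'(i1) = μ'(i2) = μ(i)^{-1} − √(μ(i)^{-2} − 1) if μ(i) > 0, and μ'(i1) = μ'(i2) = 0 if μ(i) = 0. Then the pushforward of the subgraphs-world distribution π_subs on G' (with parameters λ', μ') under the map x' ↦ x'∘φ equals the subgraphs-world distribution π_subs on G (with parameters λ, μ). -/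
/-- The degree of the vertex `v` under the configuration `x` (viewed as the
set of edges with value 1): the number of edges of `x` incident to `v`. -/
def degU1 {V : Type*} [DecidableEq V] (x : Finset (Sym2 V)) (v : V) : ℕ :=
  (x.filter (fun e => v ∈ e)).card

/-- The subgraphs-world weight of a configuration `x`:
`(∏_{e ∈ x} λ(e)) · (∏_{v : deg_x(v) odd} μ(v))`. -/
def wSubs1 {V : Type*} [Fintype V] [DecidableEq V]
    (lam : Sym2 V → ℝ) (mu : V → ℝ) (x : Finset (Sym2 V)) : ℝ :=
  (∏ e ∈ x, lam e) *
    ∏ v ∈ Finset.univ.filter (fun v => Odd (degU1 x v)), mu v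

/-!
Merging the two copies `i₁`, `i₂` of `i` maps every edge `φ e` back to `e`, so the configurations
of the split graph lying over `x` are `φ(x)` and `φ(x) ∪ {i₁i₂}`. The degrees of `i₁` and `i₂` in
`φ(x)` add up to the degree of `i` in `x`, and switching on `i₁i₂` flips both parities. If `s`, `t`
are the weights of `i₁`, `i₂`, then the two configurations together contribute `1 + st` when `i` has
even degree and `s + t` when it has odd degree. Hence they contribute `(1 + st) w(x)` as soon as
`s + t = μ(i) (1 + st)`, and the constant `1 + st` cancels on normalizing.
-/

section InsertImage

variable {α β M : Type*} [DecidableEq β] [AddCommMonoid M]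
  {φ : α → β} {E : Finset α} {b : β}

lemma sum_powerset_image (hφ : Set.InjOn φ E) (F : Finset β → M) :
    ∑ y ∈ (E.image φ).powerset, F y = ∑ x ∈ E.powerset, F (x.image φ) := by
  classical
  rw [Finset.powerset_image, Finset.sum_image]
  simpa only [Finset.coe_powerset] using Finset.image_injOn_powerset_of_injOn hφ

lemma sum_powerset_insert_image (hφ : Set.InjOn φ E) (hb : b ∉ E.image φ) (F : Finset β → M) :
    ∑ y ∈ (insert b (E.image φ)).powerset, F y =
      ∑ x ∈ E.powerset, (F (x.image φ) + F (insert b (x.image φ))) := by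
  rw [Finset.sum_powerset_insert hb, sum_powerset_image hφ,
    sum_powerset_image hφ fun y => F (insert b y), ← Finset.sum_add_distrib]

lemma filter_mem_image_eq {x : Finset α} (hφ : Set.InjOn φ E) (hx : x ⊆ E) :
    E.filter (fun e => φ e ∈ x.image φ) = x := by
  ext e
  simp only [Finset.mem_filter, Finset.mem_image]
  exact ⟨fun ⟨he, f, hf, h⟩ => hφ (hx hf) he h ▸ hf, fun h => ⟨hx h, e, h, rfl⟩⟩

lemma filter_mem_insert_image_eq {x : Finset α} (hφ : Set.InjOn φ E) (hb : b ∉ E.image φ)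
    (hx : x ⊆ E) : E.filter (fun e => φ e ∈ insert b (x.image φ)) = x := by
  refine (Finset.filter_congr fun e he => ?_).trans (filter_mem_image_eq hφ hx)
  rw [Finset.mem_insert, or_iff_right]
  exact fun h => hb (h ▸ Finset.mem_image_of_mem φ he)

lemma sum_filter_powerset_insert_image [DecidableEq α] {x : Finset α} (hφ : Set.InjOn φ E)
    (hb : b ∉ E.image φ) (hx : x ⊆ E) (F : Finset β → M) :
    ∑ y ∈ (insert b (E.image φ)).powerset.filter (fun y => E.filter (fun e => φ e ∈ y) = x), F y =
      F (x.image φ) + F (insert b (x.image φ)) := by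
  rw [Finset.sum_filter, sum_powerset_insert_image hφ hb]
  calc
    _ = ∑ z ∈ E.powerset, if z = x then F (z.image φ) + F (insert b (z.image φ)) else 0 := by
      refine Finset.sum_congr rfl fun z hz => ?_
      have hzE := Finset.mem_powerset.1 hz
      rw [filter_mem_image_eq hφ hzE, filter_mem_insert_image_eq hφ hb hzE]
      split_ifs
      · rfl
      · exact add_zero 0
    _ = F (x.image φ) + F (insert b (x.image φ)) := by
      rw [Finset.sum_ite_eq_of_mem' _ _ _ (Finset.mem_powerset.2 hx)]

end InsertImage

section ParityFactor

/-- The factor contributed to the subgraphs-world weight by a node of weight `m` and degree `n`. -/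
def parityFactor {M : Type*} [One M] (m : M) (n : ℕ) : M :=
  if Odd n then m else 1

lemma parityFactor_mul_add_parityFactor_succ_mul {R : Type*} [CommSemiring R] {m s t : R}
    (h : s + t = m * (1 + s * t)) (a b : ℕ) :
    parityFactor s a * parityFactor t b + parityFactor s (a + 1) * parityFactor t (b + 1) =
      (1 + s * t) * parityFactor m (a + b) := by
  by_cases ha : Odd a <;> by_cases hb : Odd b <;>
    simp only [parityFactor, Nat.odd_add_one, Nat.odd_add', ha, hb, ← Nat.not_odd_iff_even,
      if_true, if_false, not_true, not_false_iff, iff_true, iff_false, mul_one, one_mul]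
  · rw [add_comm]
  · rw [h, mul_comm]
  · rw [add_comm, h, mul_comm]

/-- The common weight of the two copies of a node of weight `m`: for `0 < m ≤ 1`, the root in
`[0, 1]` of the quadratic `m t ^ 2 - 2 t + m`. -/
noncomputable def splitWeight (m : ℝ) : ℝ :=
  if 0 < m then m⁻¹ - Real.sqrt (m⁻¹ ^ 2 - 1) else 0

lemma splitWeight_add_self {m : ℝ} (hm : m ∈ Set.Icc (0 : ℝ) 1) :
    splitWeight m + splitWeight m = m * (1 + splitWeight m * splitWeight m) := by
  obtain rfl | hpos := hm.1.eq_or_lt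
  · simp [splitWeight]
  · have hinv : 1 ≤ m⁻¹ := (one_le_inv₀ hpos).2 hm.2
    have hsq : Real.sqrt (m⁻¹ ^ 2 - 1) ^ 2 = m⁻¹ ^ 2 - 1 :=
      Real.sq_sqrt (sub_nonneg.2 (one_le_pow₀ hinv))
    have hmul : m * m⁻¹ = 1 := mul_inv_cancel₀ hpos.ne'
    rw [splitWeight, if_pos hpos]
    linear_combination (-2 * (m⁻¹ - Real.sqrt (m⁻¹ ^ 2 - 1))) * hmul - m * hsq

lemma one_add_splitWeight_mul_self_pos (m : ℝ) : 0 < 1 + splitWeight m * splitWeight m :=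
  add_pos_of_pos_of_nonneg one_pos (mul_self_nonneg _)

end ParityFactor

section Degree

variable {V W : Type*} [DecidableEq W]

lemma degU1_insert {y : Finset (Sym2 W)} {e : Sym2 W} (he : e ∉ y) (w : W) :
    degU1 (insert e y) w = degU1 y w + if w ∈ e then 1 else 0 := by
  unfold degU1
  rw [Finset.filter_insert]
  split_ifs
  · rw [Finset.card_insert_of_notMem fun h => he (Finset.mem_of_mem_filter _ h)]
  · rfl

lemma degU1_image_of_injOn {α : Type*} {φ : α → Sym2 W} {x : Finset α} (hφ : Set.InjOn φ x)
    (w : W) : degU1 (x.image φ) w = (x.filter fun e => w ∈ φ e).card := by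
  rw [degU1, Finset.filter_image, Finset.card_image_of_injOn]
  exact hφ.mono (Finset.coe_subset.2 (Finset.filter_subset _ _))

variable [DecidableEq V] {p : W → V} {v : V} {t : Finset W}

lemma card_filter_mem_of_fiber (ht : ∀ w, w ∈ t ↔ p w = v) {e : Sym2 W}
    (he : ¬ (e.map p).IsDiag) :
    (t.filter fun w => w ∈ e).card = if v ∈ e.map p then 1 else 0 := by
  induction e with | _ a b
  have hab : p a ≠ p b := he
  have hends : t.filter (fun w => w ∈ s(a, b)) =
      ({a, b} : Finset W).filter fun w => p w = v := by
    ext w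
    simp [ht, and_comm]
  rw [hends, Finset.filter_insert, Finset.filter_singleton]
  simp only [Sym2.map_mk, Sym2.mem_iff]
  by_cases ha : p a = v
  · have hb : p b ≠ v := fun hb => hab (ha.trans hb.symm)
    simp [ha, hb]
  · by_cases hb : p b = v
    · simp [ha, hb]
    · simp [ha, hb, Ne.symm ha, Ne.symm hb]

lemma sum_degU1_image_of_fiber (ht : ∀ w, w ∈ t ↔ p w = v) {φ : Sym2 V → Sym2 W}
    {x : Finset (Sym2 V)} (hx : ∀ e ∈ x, ¬ e.IsDiag) (hφ : Set.LeftInvOn (Sym2.map p) φ x) :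
    ∑ w ∈ t, degU1 (x.image φ) w = degU1 x v :=
  calc ∑ w ∈ t, degU1 (x.image φ) w
      = ∑ w ∈ t, (x.filter fun e => w ∈ φ e).card :=
        Finset.sum_congr rfl fun w _ => degU1_image_of_injOn hφ.injOn w
    _ = ∑ e ∈ x, (t.filter fun w => w ∈ φ e).card :=
        Finset.sum_card_bipartiteAbove_eq_sum_card_bipartiteBelow _
    _ = ∑ e ∈ x, if v ∈ e then 1 else 0 := by
        refine Finset.sum_congr rfl fun e he => ?_
        rw [card_filter_mem_of_fiber ht ((hφ he).symm ▸ hx e he), hφ he]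
    _ = degU1 x v := (Finset.card_filter _ _).symm

end Degree

section Weight

variable {V : Type*} [Fintype V] [DecidableEq V] {lam : Sym2 V → ℝ} {mu : V → ℝ}

lemma wSubs1_eq_prod_mul_prod_parityFactor (lam : Sym2 V → ℝ) (mu : V → ℝ)
    (x : Finset (Sym2 V)) :
    wSubs1 lam mu x = (∏ e ∈ x, lam e) * ∏ v, parityFactor (mu v) (degU1 x v) := by
  rw [wSubs1, Finset.prod_filter]
  rfl

lemma wSubs1_empty (lam : Sym2 V → ℝ) (mu : V → ℝ) : wSubs1 lam mu ∅ = 1 := by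
  simp [wSubs1, degU1]

lemma wSubs1_nonneg {x : Finset (Sym2 V)} (hlam : ∀ e ∈ x, 0 ≤ lam e) (hmu : ∀ v, 0 ≤ mu v) :
    0 ≤ wSubs1 lam mu x :=
  mul_nonneg (Finset.prod_nonneg hlam) (Finset.prod_nonneg fun v _ => hmu v)

lemma sum_powerset_wSubs1_pos {E : Finset (Sym2 V)} (hlam : ∀ e ∈ E, 0 ≤ lam e)
    (hmu : ∀ v, 0 ≤ mu v) : 0 < ∑ y ∈ E.powerset, wSubs1 lam mu y :=
  Finset.sum_pos'
    (fun _ hy => wSubs1_nonneg (fun e he => hlam e (Finset.mem_powerset.1 hy he)) hmu)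
    ⟨∅, Finset.empty_mem_powerset E, by rw [wSubs1_empty]; exact one_pos⟩

end Weight

section NodeSplitting

variable {V : Type*} {i : V}

/-- The projection from the split vertex set that merges the two copies of `i`. -/
def mergeCopies (i : V) : {v : V // v ≠ i} ⊕ Bool → V :=
  Sum.elim Subtype.val fun _ => i

/-- The edge joining the two copies of the split vertex. -/
def splitEdge (i : V) : Sym2 ({v : V // v ≠ i} ⊕ Bool) :=
  s(Sum.inr false, Sum.inr true)

lemma isDiag_map_mergeCopies_splitEdge : ((splitEdge i).map (mergeCopies i)).IsDiag :=
  rfl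

variable {φ : Sym2 V → Sym2 ({v : V // v ≠ i} ⊕ Bool)} {E x : Finset (Sym2 V)}

lemma leftInvOn_map_mergeCopies {g : V → {v : V // v ≠ i} ⊕ Bool} (hE : ∀ e ∈ E, ¬ e.IsDiag)
    (hg : ∀ (v : V) (h : v ≠ i), g v = Sum.inl ⟨v, h⟩)
    (hφ : ∀ e ∈ E, i ∉ e → φ e = e.map g)
    (hφi : ∀ j, s(i, j) ∈ E → ∃ b, φ s(i, j) = s(Sum.inr b, g j)) :
    Set.LeftInvOn (Sym2.map (mergeCopies i)) φ E := by
  have hmerge (v : V) (hv : v ≠ i) : mergeCopies i (g v) = v := by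
    rw [hg v hv]
    rfl
  intro e he
  by_cases hi : i ∈ e
  · obtain ⟨j, rfl⟩ := Sym2.mem_iff_exists.1 hi
    obtain ⟨b, hb⟩ := hφi j he
    have hj : j ≠ i := fun h => hE _ he h.symm
    rw [hb, Sym2.map_mk, hmerge j hj]
    rfl
  · calc (φ e).map (mergeCopies i) = e.map (mergeCopies i ∘ g) := by
          rw [hφ e he hi, Sym2.map_map]
      _ = e.map id := Sym2.map_congr fun v hv => hmerge v fun h => hi (h ▸ hv)
      _ = e := by rw [Sym2.map_id, id]

variable [DecidableEq V]

lemma splitEdge_notMem_image (hE : ∀ e ∈ E, ¬ e.IsDiag)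
    (hφ : Set.LeftInvOn (Sym2.map (mergeCopies i)) φ E) : splitEdge i ∉ E.image φ := by
  rw [Finset.mem_image]
  rintro ⟨e, he, h⟩
  apply hE e he
  rw [← hφ he, h]
  exact isDiag_map_mergeCopies_splitEdge

lemma degU1_insert_splitEdge_inl {y : Finset (Sym2 ({v : V // v ≠ i} ⊕ Bool))}
    (hy : splitEdge i ∉ y) (v : {v : V // v ≠ i}) :
    degU1 (insert (splitEdge i) y) (Sum.inl v) = degU1 y (Sum.inl v) := by
  rw [degU1_insert hy, if_neg (by simp [splitEdge]), add_zero]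

lemma degU1_insert_splitEdge_inr {y : Finset (Sym2 ({v : V // v ≠ i} ⊕ Bool))}
    (hy : splitEdge i ∉ y) (b : Bool) :
    degU1 (insert (splitEdge i) y) (Sum.inr b) = degU1 y (Sum.inr b) + 1 := by
  rw [degU1_insert hy, if_pos (by cases b <;> simp [splitEdge])]

lemma degU1_image_inl (hx : ∀ e ∈ x, ¬ e.IsDiag)
    (hφ : Set.LeftInvOn (Sym2.map (mergeCopies i)) φ x) (v : {v : V // v ≠ i}) :
    degU1 (x.image φ) (Sum.inl v) = degU1 x v := by
  have hfiber (w) : w ∈ ({Sum.inl v} : Finset ({v : V // v ≠ i} ⊕ Bool)) ↔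
      mergeCopies i w = v := by
    rcases w with w | b
    · simp [mergeCopies, Subtype.ext_iff]
    · simp [mergeCopies, v.2.symm]
  rw [← sum_degU1_image_of_fiber hfiber hx hφ, Finset.sum_singleton]

lemma degU1_image_inr_add (hx : ∀ e ∈ x, ¬ e.IsDiag)
    (hφ : Set.LeftInvOn (Sym2.map (mergeCopies i)) φ x) :
    degU1 (x.image φ) (Sum.inr false) + degU1 (x.image φ) (Sum.inr true) = degU1 x i := by
  have hfiber (w) : w ∈ ({Sum.inr false, Sum.inr true} : Finset ({v : V // v ≠ i} ⊕ Bool)) ↔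
      mergeCopies i w = i := by
    rcases w with w | b
    · simpa [mergeCopies] using w.2
    · cases b <;> simp [mergeCopies]
  rw [← sum_degU1_image_of_fiber hfiber hx hφ, Finset.sum_pair (by simp)]

variable [Fintype V]

lemma wSubs1_split (lam : Sym2 ({v : V // v ≠ i} ⊕ Bool) → ℝ)
    (mu : {v : V // v ≠ i} ⊕ Bool → ℝ) (y : Finset (Sym2 ({v : V // v ≠ i} ⊕ Bool))) :
    wSubs1 lam mu y = (∏ e ∈ y, lam e) *
      ((∏ v : {v : V // v ≠ i}, parityFactor (mu (Sum.inl v)) (degU1 y (Sum.inl v))) *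
        (parityFactor (mu (Sum.inr false)) (degU1 y (Sum.inr false)) *
          parityFactor (mu (Sum.inr true)) (degU1 y (Sum.inr true)))) := by
  rw [wSubs1_eq_prod_mul_prod_parityFactor, Fintype.prod_sum_type, Fintype.prod_bool,
    mul_comm (parityFactor (mu (Sum.inr true)) _)]

lemma wSubs1_eq_mul_subtype_ne (lam : Sym2 V → ℝ) (mu : V → ℝ) (i : V) (y : Finset (Sym2 V)) :
    wSubs1 lam mu y = (∏ e ∈ y, lam e) *
      ((∏ v : {v : V // v ≠ i}, parityFactor (mu v) (degU1 y v)) *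
        parityFactor (mu i) (degU1 y i)) := by
  rw [wSubs1_eq_prod_mul_prod_parityFactor, Fintype.prod_eq_mul_prod_subtype_ne _ i,
    mul_comm (parityFactor (mu i) _)]

lemma wSubs1_image_add_insert_splitEdge (hx : ∀ e ∈ x, ¬ e.IsDiag)
    (hφ : Set.LeftInvOn (Sym2.map (mergeCopies i)) φ x)
    {lam : Sym2 V → ℝ} {mu : V → ℝ} {lam' : Sym2 ({v : V // v ≠ i} ⊕ Bool) → ℝ}
    {mu' : {v : V // v ≠ i} ⊕ Bool → ℝ}
    (hlam : ∀ e ∈ x, lam' (φ e) = lam e) (hlam' : lam' (splitEdge i) = 1)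
    (hmu : ∀ v : {v : V // v ≠ i}, mu' (Sum.inl v) = mu v)
    (hmu' : mu' (Sum.inr false) + mu' (Sum.inr true) =
      mu i * (1 + mu' (Sum.inr false) * mu' (Sum.inr true))) :
    wSubs1 lam' mu' (x.image φ) + wSubs1 lam' mu' (insert (splitEdge i) (x.image φ)) =
      (1 + mu' (Sum.inr false) * mu' (Sum.inr true)) * wSubs1 lam mu x := by
  have hsplit := splitEdge_notMem_image hx hφ
  have hprod : ∏ e ∈ x.image φ, lam' e = ∏ e ∈ x, lam e := by
    rw [Finset.prod_image hφ.injOn]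
    exact Finset.prod_congr rfl hlam
  rw [wSubs1_split, wSubs1_split, wSubs1_eq_mul_subtype_ne lam mu i,
    Finset.prod_insert hsplit, hlam', one_mul, hprod]
  simp only [degU1_insert_splitEdge_inl hsplit, degU1_insert_splitEdge_inr hsplit,
    degU1_image_inl hx hφ, hmu]
  rw [← mul_add, ← mul_add, parityFactor_mul_add_parityFactor_succ_mul hmu',
    degU1_image_inr_add hx hφ]
  ring

end NodeSplitting

theorem stmt1_general {V : Type*} [Fintype V] [DecidableEq V] {i : V}
    {E : Finset (Sym2 V)} (hE : ∀ e ∈ E, ¬ e.IsDiag)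
    {φ : Sym2 V → Sym2 ({v : V // v ≠ i} ⊕ Bool)}
    (hφ : Set.LeftInvOn (Sym2.map (mergeCopies i)) φ E)
    {lam : Sym2 V → ℝ} {mu : V → ℝ} {lam' : Sym2 ({v : V // v ≠ i} ⊕ Bool) → ℝ}
    {mu' : {v : V // v ≠ i} ⊕ Bool → ℝ}
    (hlam : ∀ e ∈ E, lam' (φ e) = lam e) (hlam' : lam' (splitEdge i) = 1)
    (hmu : ∀ v : {v : V // v ≠ i}, mu' (Sum.inl v) = mu v)
    (hmu' : mu' (Sum.inr false) + mu' (Sum.inr true) =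
      mu i * (1 + mu' (Sum.inr false) * mu' (Sum.inr true)))
    (hc : 1 + mu' (Sum.inr false) * mu' (Sum.inr true) ≠ 0)
    (hZ : ∑ y ∈ E.powerset, wSubs1 lam mu y ≠ 0) :
    ∑ y' ∈ (insert (splitEdge i) (E.image φ)).powerset, wSubs1 lam' mu' y' ≠ 0 ∧
    ∀ x ∈ E.powerset,
      (∑ x' ∈ (insert (splitEdge i) (E.image φ)).powerset.filter
            (fun x' => E.filter (fun e => φ e ∈ x') = x),
          wSubs1 lam' mu' x') /
        (∑ y' ∈ (insert (splitEdge i) (E.image φ)).powerset, wSubs1 lam' mu' y')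
      = wSubs1 lam mu x / (∑ y ∈ E.powerset, wSubs1 lam mu y) := by
  have hsplit := splitEdge_notMem_image hE hφ
  have hpair : ∀ x ∈ E.powerset,
      wSubs1 lam' mu' (x.image φ) + wSubs1 lam' mu' (insert (splitEdge i) (x.image φ)) =
        (1 + mu' (Sum.inr false) * mu' (Sum.inr true)) * wSubs1 lam mu x := by
    intro x hx
    have hxE := Finset.mem_powerset.1 hx
    exact wSubs1_image_add_insert_splitEdge (fun e he => hE e (hxE he))
      (hφ.mono (Finset.coe_subset.2 hxE)) (fun e he => hlam e (hxE he)) hlam' hmu hmu'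
  rw [sum_powerset_insert_image hφ.injOn hsplit, Finset.sum_congr rfl hpair, ← Finset.mul_sum]
  refine ⟨mul_ne_zero hc hZ, fun x hx => ?_⟩
  rw [sum_filter_powerset_insert_image hφ.injOn hsplit (Finset.mem_powerset.1 hx), hpair x hx,
    mul_div_mul_left _ _ hc]

/-- Splitting a node `i` of degree `d ≥ 2` into two nodes
`i1, i2` (modeled as `Sum.inr false`, `Sum.inr true` in the new vertex type
`{v // v ≠ i} ⊕ Bool`), joined by an edge of weight 1, with the first two
neighbors `nbr 0, nbr 1` attached to `i1` and the rest to `i2`, and with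
`μ'(i1) = μ'(i2) = μ(i)⁻¹ − √(μ(i)⁻² − 1)` when `μ(i) > 0` (and `0` when
`μ(i) = 0`), preserves the subgraphs-world distribution: the pushforward of
`π_subs` on `G'` under `x' ↦ x' ∘ φ` equals `π_subs` on `G`. -/
theorem stmt1 {V : Type*} [Fintype V] [DecidableEq V]
    (E : Finset (Sym2 V)) (hE : ∀ e ∈ E, ¬ e.IsDiag)
    (lam : Sym2 V → ℝ) (mu : V → ℝ)
    (hlam : ∀ e ∈ E, lam e ∈ Set.Icc (0 : ℝ) 1)
    (hmu : ∀ v : V, mu v ∈ Set.Icc (0 : ℝ) 1)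
    (i : V) (d : ℕ) (hd : 2 ≤ d)
    (nbr : Fin d → V) (hinj : Function.Injective nbr)
    (hnbr : ∀ j : V, s(i, j) ∈ E ↔ ∃ k : Fin d, nbr k = j)
    (hdeg : (E.filter (fun e => i ∈ e)).card = d)
    -- the embedding of the surviving vertices into the new vertex type
    (g : V → {v : V // v ≠ i} ⊕ Bool)
    (hg : ∀ (v : V) (h : v ≠ i), g v = Sum.inl ⟨v, h⟩)
    -- the edge correspondence φ
    (φ : Sym2 V → Sym2 ({v : V // v ≠ i} ⊕ Bool))
    (hφ1 : ∀ e ∈ E, i ∉ e → φ e = e.map g)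
    (hφ2 : ∀ k : Fin d, (k : ℕ) < 2 →
      φ s(i, nbr k) = s(Sum.inr false, g (nbr k)))
    (hφ3 : ∀ k : Fin d, 2 ≤ (k : ℕ) →
      φ s(i, nbr k) = s(Sum.inr true, g (nbr k)))
    -- the new edge set
    (E' : Finset (Sym2 ({v : V // v ≠ i} ⊕ Bool)))
    (hE' : E' = E.image φ ∪ {s(Sum.inr false, Sum.inr true)})
    -- the new edge weights
    (lam' : Sym2 ({v : V // v ≠ i} ⊕ Bool) → ℝ)
    (hlam'1 : ∀ e ∈ E, lam' (φ e) = lam e)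
    (hlam'2 : lam' s(Sum.inr false, Sum.inr true) = 1)
    -- the new node weights
    (mu' : {v : V // v ≠ i} ⊕ Bool → ℝ)
    (hmu'1 : ∀ (v : V) (h : v ≠ i), mu' (Sum.inl ⟨v, h⟩) = mu v)
    (hmu'2 : ∀ b : Bool, mu' (Sum.inr b) =
      if 0 < mu i then (mu i)⁻¹ - Real.sqrt (((mu i)⁻¹) ^ 2 - 1) else 0) :
    ∀ x ∈ E.powerset,
      (∑ x' ∈ E'.powerset.filter
            (fun x' => E.filter (fun e => φ e ∈ x') = x),
          wSubs1 lam' mu' x') /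
        (∑ y' ∈ E'.powerset, wSubs1 lam' mu' y')
      = wSubs1 lam mu x / (∑ y ∈ E.powerset, wSubs1 lam mu y) := by
  obtain rfl := hE'.trans (Finset.union_singleton _ _)
  have hφ := leftInvOn_map_mergeCopies hE hg hφ1 fun j hj => by
    obtain ⟨k, rfl⟩ := (hnbr j).1 hj
    exact (lt_or_ge (k : ℕ) 2).elim (fun h => ⟨false, hφ2 k h⟩) fun h => ⟨true, hφ3 k h⟩
  have hZ := sum_powerset_wSubs1_pos (fun e he => (hlam e he).1) fun v => (hmu v).1
  have hcopy (b : Bool) : mu' (Sum.inr b) = splitWeight (mu i) := hmu'2 b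
  exact (stmt1_general hE hφ hlam'1 hlam'2 (fun v => hmu'1 v v.2)
    (by rw [hcopy, hcopy, splitWeight_add_self (hmu i)])
    (by rw [hcopy, hcopy]; exact (one_add_splitWeight_mul_self_pos _).ne') hZ.ne').2
end

section
/- Let G = (V,E) be a finite simple graph with edge weights λ: E → [0,1] and node weights μ: V → [0,1], and let i ∈ V have degree exactly 2 with incident edges {i,j} and {i,k}. Construct G' = (V',E') with V' = (V \ {i}) ∪ {i',i''} and E' = (E \ {{i,j},{i,k}}) ∪ {{i',j},{i'',j},{i',k},{i'',k},{i',i''}}. Let λ1, λ2, μ1 ∈ [0,1] satisfy 2λ1/(1+λ1²) = λ({i,j}), 2λ2/(1+λ2²) = λ({i,k}), and 2μ1/(1+μ1²) = μ(i). Define λ'({i',j}) = λ'({i'',j}) = λ1, λ'({i',k}) = λ'({i'',k}) = λ2, λ'({i',i''}) = 1, μ'(i') = μ'(i'') = μ1, and let λ', μ' agree with λ, μ on all other edges and nodes. Draw X' ∼ π_subs on G' with parameters (λ',μ'), and define X ∈ {0,1}^E by X(e) = X'(e) for e ∈ E \ {{i,j},{i,k}}, X({i,j}) = (X'({i',j})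 + X'({i'',j})) mod 2, and X({i,k}) = (X'({i',k}) + X'({i'',k})) mod 2. Then X ∼ π_subs on G with parameters (λ,μ). -/
/-- The degree of the vertex `v` under the configuration `x`. -/
def degU5 {V : Type*} [DecidableEq V] (x : Finset (Sym2 V)) (v : V) : ℕ :=
  (x.filter (fun e => v ∈ e)).card

/-- The subgraphs-world weight of a configuration `x`. -/
def wSubs5 {V : Type*} [Fintype V] [DecidableEq V]
    (lam : Sym2 V → ℝ) (mu : V → ℝ) (x : Finset (Sym2 V)) : ℝ :=
  (∏ e ∈ x, lam e) *
    ∏ v ∈ Finset.univ.filter (fun v => Odd (degU5 x v)), mu v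

/-!
A configuration on the cloned graph has coordinates `(x₀, A, B, c)`: its edges away from the clones,
the sets `A` and `B` of clones joined to `j` and to `k`, and whether it contains the bridge between
the clones. Its projection keeps `x₀` and the parities of `#A` and `#B`, and this preserves the
parity of the degree of every surviving vertex. Hence the fiber over `x` has total weight equal to
the part of the weight of `x` away from `i`, times the sum of `l1 ^ #A * l2 ^ #B * m ^ #D` over the
admissible `A`, `B` and `c`, where `D` is the set of clones of odd degree.

Without the bridge `D` is `A ∆ B`, and the bridge replaces it by its complement. So the sum over `c`
is `2 * m` or `1 + m ^ 2` according to the parity of `#A + #B` alone, and the sums over `A` and `B`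
are likewise `2 * l` or `1 + l ^ 2`. After division by `(1 + l1 ^ 2) * (1 + l2 ^ 2) * (1 + m ^ 2)`,
which does not depend on `x`, these are the weights at `i` prescribed by the three equations.
-/

open Finset
open scoped symmDiff

section Parity

theorem odd_card_symmDiff {α : Type*} [DecidableEq α] (A B : Finset α) :
    Odd #(A ∆ B) ↔ Xor (Odd #A) (Odd #B) := by
  have hAB : #(A ∆ B) = #(A \ B) + #(B \ A) := card_union_of_disjoint disjoint_sdiff_sdiff
  have hA : #(A \ B) + #(A ∩ B) = #A := card_sdiff_add_card_inter A B
  have hB : #(B \ A) + #(A ∩ B) = #B := inter_comm A B ▸ card_sdiff_add_card_inter B A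
  grind

theorem odd_card_filter_bool (p : Bool → Prop) [DecidablePred p] :
    Odd #{t | p t} ↔ ¬(p false ↔ p true) := by
  by_cases hf : p false <;> by_cases ht : p true <;>
    simp [Fintype.univ_bool, filter_insert, filter_singleton, hf, ht]

variable {R : Type*} [CommSemiring R]

theorem sum_pow_card_of_odd_iff (a : R) (P : Prop) [Decidable P] :
    ∑ A : Finset Bool with (Odd #A ↔ P), a ^ #A = if P then 2 * a else 1 + a ^ 2 := by
  rw [sum_filter, ← powerset_univ,
    sum_powerset_apply_card fun n => if Odd n ↔ P then a ^ n else 0]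
  by_cases hP : P <;> simp [hP, sum_range_succ, Nat.odd_iff]

theorem pow_card_add_pow_card_compl (a : R) (D : Finset Bool) :
    a ^ #D + a ^ #Dᶜ = if Odd #D then 2 * a else 1 + a ^ 2 := by
  have hD : #D = 0 ∨ #D = 1 ∨ #D = 2 := by
    have : #D ≤ 2 := card_le_univ D
    lia
  rcases hD with h | h | h <;> simp [card_compl, h, two_mul, add_comm, Nat.odd_iff]

theorem sum_pow_card_clones (a b c : R) (P Q : Prop) [Decidable P] [Decidable Q] :
    ∑ p : Finset Bool × Finset Bool × Bool with (Odd #p.1 ↔ P) ∧ (Odd #p.2.1 ↔ Q),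
        a ^ #p.1 * b ^ #p.2.1 * c ^ #(if p.2.2 then (p.1 ∆ p.2.1)ᶜ else p.1 ∆ p.2.1) =
      (if P then 2 * a else 1 + a ^ 2) * (if Q then 2 * b else 1 + b ^ 2) *
        (if Xor P Q then 2 * c else 1 + c ^ 2) := by
  have hprod : ({p | (Odd #p.1 ↔ P) ∧ (Odd #p.2.1 ↔ Q)} :
        Finset (Finset Bool × Finset Bool × Bool)) =
      ({A | Odd #A ↔ P} : Finset (Finset Bool)) ×ˢ
        ({B | Odd #B ↔ Q} : Finset (Finset Bool)) ×ˢ (univ : Finset Bool) := by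
    ext p
    simp
  have hbridge (A B : Finset Bool) (hA : Odd #A ↔ P) (hB : Odd #B ↔ Q) :
      ∑ t : Bool, c ^ #(if t then (A ∆ B)ᶜ else A ∆ B) =
        if Xor P Q then 2 * c else 1 + c ^ 2 := by
    rw [Fintype.sum_bool, add_comm]
    exact (pow_card_add_pow_card_compl c (A ∆ B)).trans
      (if_congr (by rw [odd_card_symmDiff, hA, hB]) rfl rfl)
  rw [hprod, sum_product, ← sum_pow_card_of_odd_iff a P, ← sum_pow_card_of_odd_iff b Q,
    sum_mul_sum, sum_mul]
  refine sum_congr rfl fun A hA => ?_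
  rw [sum_product, sum_mul]
  refine sum_congr rfl fun B hB => ?_
  rw [← hbridge A B (mem_filter.1 hA).2 (mem_filter.1 hB).2, mul_sum]

end Parity

theorem ite_two_mul_eq_mul_ite {K : Type*} [Field K] [LinearOrder K] [IsStrictOrderedRing K]
    {a w : K} (haw : 2 * a / (1 + a ^ 2) = w) (P : Prop) [Decidable P] :
    (if P then 2 * a else 1 + a ^ 2) = (1 + a ^ 2) * if P then w else 1 := by
  have h : 1 + a ^ 2 ≠ 0 := by positivity
  rw [← haw, mul_ite, mul_div_cancel₀ _ h, mul_one]

theorem sum_fiber_div_sum_eq {α β K : Type*} [DecidableEq β] [Field K] {S : Finset α}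
    {T : Finset β} {f : α → β} (hf : ∀ a ∈ S, f a ∈ T) {u : α → K} {w : β → K} {C : K}
    (hC : C ≠ 0) (hu : ∀ b ∈ T, ∑ a ∈ S with f a = b, u a = C * w b) {b : β} (hb : b ∈ T) :
    (∑ a ∈ S with f a = b, u a) / ∑ a ∈ S, u a = w b / ∑ c ∈ T, w c := by
  rw [← sum_fiberwise_of_maps_to hf, hu b hb, sum_congr rfl hu, ← mul_sum,
    mul_div_mul_left _ _ hC]

section Sym2Map

variable {α β : Type*} {f : α → β} {s : Set α}

theorem sym2Map_injOn (hf : s.InjOn f) : Set.InjOn (Sym2.map f) {e | ∀ a ∈ e, a ∈ s} := by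
  rintro ⟨a, b⟩ hab ⟨c, d⟩ hcd h
  simp only [Set.mem_ofPred_eq, Sym2.ball] at hab hcd
  simpa [hf.eq_iff hab.1 hcd.1, hf.eq_iff hab.1 hcd.2, hf.eq_iff hab.2 hcd.1,
    hf.eq_iff hab.2 hcd.2] using h

theorem mem_sym2Map_iff (hf : s.InjOn f) {e : Sym2 α} (he : ∀ b ∈ e, b ∈ s) {a : α}
    (ha : a ∈ s) : f a ∈ Sym2.map f e ↔ a ∈ e := by
  rw [Sym2.mem_map]
  exact ⟨fun ⟨b, hb, h⟩ => hf (he b hb) ha h ▸ hb, fun h => ⟨a, h, rfl⟩⟩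

end Sym2Map

section Weights

variable {V : Type*} [DecidableEq V]

theorem degU5_eq_sum (x : Finset (Sym2 V)) (v : V) :
    degU5 x v = ∑ e ∈ x, if v ∈ e then 1 else 0 := by
  rw [degU5, card_filter]

theorem wSubs5_eq_prod_ite [Fintype V] (lam : Sym2 V → ℝ) (mu : V → ℝ) (x : Finset (Sym2 V)) :
    wSubs5 lam mu x = (∏ e ∈ x, lam e) * ∏ v, if Odd (degU5 x v) then mu v else 1 := by
  rw [wSubs5, prod_filter]

/-- The part of the weight of the configuration `x` that does not involve the vertex `i`: the
weights of the edges avoiding `i` and of the other vertices of odd degree. -/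
def weightAway [Fintype V] (i : V) (lam : Sym2 V → ℝ) (mu : V → ℝ) (x : Finset (Sym2 V)) : ℝ :=
  (∏ e ∈ x with i ∉ e, lam e) * ∏ v : {v : V // v ≠ i}, if Odd (degU5 x v) then mu v else 1

variable {i j k : V} {x : Finset (Sym2 V)}

theorem eq_or_eq_of_card_filter_mem_eq_two {E : Finset (Sym2 V)} (hjk : j ≠ k)
    (hj : s(i, j) ∈ E) (hk : s(i, k) ∈ E) (hcard : #{e ∈ E | i ∈ e} = 2) :
    ∀ e ∈ E, i ∈ e → e = s(i, j) ∨ e = s(i, k) := by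
  have hsub : {s(i, j), s(i, k)} ⊆ E.filter (i ∈ ·) := by
    simp [insert_subset_iff, hj, hk]
  have hpair : #{s(i, j), s(i, k)} = 2 := card_pair (by rwa [Ne, Sym2.congr_right])
  have heq := eq_of_subset_of_card_le hsub (by rw [hcard, hpair])
  intro e he hie
  have hmem : e ∈ E.filter (i ∈ ·) := mem_filter.2 ⟨he, hie⟩
  simpa [← heq] using hmem

@[to_additive]
theorem prod_eq_prod_filter_notMem_mul {M : Type*} [CommMonoid M] (hjk : j ≠ k)
    (hx : ∀ e ∈ x, i ∈ e → e = s(i, j) ∨ e = s(i, k)) (f : Sym2 V → M) :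
    ∏ e ∈ x, f e = (∏ e ∈ x with i ∉ e, f e) *
      ((if s(i, j) ∈ x then f s(i, j) else 1) * (if s(i, k) ∈ x then f s(i, k) else 1)) := by
  have hincident : {e ∈ x | ¬i ∉ e} = {e ∈ ({s(i, j), s(i, k)} : Finset (Sym2 V)) | e ∈ x} := by
    ext e
    simp only [mem_filter, mem_insert, mem_singleton, not_not]
    constructor
    · exact fun h => ⟨hx e h.1 h.2, h.1⟩
    · rintro ⟨rfl | rfl, h⟩ <;> simp [h]
  rw [← prod_filter_mul_prod_filter_not x (i ∉ ·), hincident, prod_filter (· ∈ x),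
    prod_pair (by rwa [Ne, Sym2.congr_right])]

theorem odd_degU5_center_iff (hjk : j ≠ k) (hx : ∀ e ∈ x, i ∈ e → e = s(i, j) ∨ e = s(i, k)) :
    Odd (degU5 x i) ↔ Xor (s(i, j) ∈ x) (s(i, k) ∈ x) := by
  rw [degU5_eq_sum, sum_eq_sum_filter_notMem_add hjk hx,
    sum_eq_zero fun e he => if_neg (mem_filter.1 he).2]
  by_cases hj : s(i, j) ∈ x <;> by_cases hk : s(i, k) ∈ x <;> simp [hj, hk]

theorem degU5_of_ne_center (hjk : j ≠ k) (hx : ∀ e ∈ x, i ∈ e → e = s(i, j) ∨ e = s(i, k))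
    {v : V} (hv : v ≠ i) :
    degU5 x v = degU5 {e ∈ x | i ∉ e} v +
      ((if s(i, j) ∈ x then if v = j then 1 else 0 else 0) +
        (if s(i, k) ∈ x then if v = k then 1 else 0 else 0)) := by
  rw [degU5_eq_sum, sum_eq_sum_filter_notMem_add hjk hx, ← degU5_eq_sum]
  simp only [Sym2.mem_iff, hv, false_or]

theorem wSubs5_eq_weightAway_mul [Fintype V] (hjk : j ≠ k)
    (hx : ∀ e ∈ x, i ∈ e → e = s(i, j) ∨ e = s(i, k)) (lam : Sym2 V → ℝ) (mu : V → ℝ) :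
    wSubs5 lam mu x = weightAway i lam mu x *
      ((if s(i, j) ∈ x then lam s(i, j) else 1) * (if s(i, k) ∈ x then lam s(i, k) else 1) *
        (if Xor (s(i, j) ∈ x) (s(i, k) ∈ x) then mu i else 1)) := by
  rw [wSubs5_eq_prod_ite, prod_eq_prod_filter_notMem_mul hjk hx,
    Fintype.prod_eq_mul_prod_subtype_ne _ i, if_congr (odd_degU5_center_iff hjk hx) rfl rfl,
    weightAway]
  ring

end Weights

section Clone

/-- The vertices of the graph in which the vertex `i` has been cloned: `Sum.inr false` and
`Sum.inr true` are the two clones of `i`. -/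
abbrev Cloned {V : Type*} (i : V) : Type _ := {v : V // v ≠ i} ⊕ Bool

variable {V : Type*} {i : V} {g : V → Cloned i}

theorem injOn_of_eq_inl (hg : ∀ v : {v : V // v ≠ i}, g v = Sum.inl v) : Set.InjOn g {i}ᶜ := by
  intro v hv w hw h
  rw [hg ⟨v, hv⟩, hg ⟨w, hw⟩] at h
  exact congrArg Subtype.val (Sum.inl_injective h)

theorem inr_notMem_sym2Map (hg : ∀ v : {v : V // v ≠ i}, g v = Sum.inl v) {e : Sym2 V}
    (he : i ∉ e) (t : Bool) : Sum.inr t ∉ Sym2.map g e := by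
  rw [Sym2.mem_map]
  rintro ⟨v, hv, h⟩
  simp [hg ⟨v, ne_of_mem_of_not_mem hv he⟩] at h

theorem sym2Map_ne_mk_inr (hg : ∀ v : {v : V // v ≠ i}, g v = Sum.inl v) {e : Sym2 V}
    (he : i ∉ e) (t : Bool) (w : Cloned i) : Sym2.map g e ≠ s(Sum.inr t, w) :=
  fun h => inr_notMem_sym2Map hg he t (h ▸ Sym2.mem_mk_left _ _)

theorem sym2Map_eq_iff (hg : ∀ v : {v : V // v ≠ i}, g v = Sum.inl v) {e f : Sym2 V}
    (he : i ∉ e) (hf : i ∉ f) : Sym2.map g e = Sym2.map g f ↔ e = f :=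
  (sym2Map_injOn (injOn_of_eq_inl hg)).eq_iff (fun _ hv => ne_of_mem_of_not_mem hv he)
    fun _ hv => ne_of_mem_of_not_mem hv hf

theorem inl_mem_sym2Map_iff (hg : ∀ v : {v : V // v ≠ i}, g v = Sum.inl v) {e : Sym2 V}
    (he : i ∉ e) (v : {v : V // v ≠ i}) : Sum.inl v ∈ Sym2.map g e ↔ (v : V) ∈ e := by
  rw [← hg v]
  exact mem_sym2Map_iff (injOn_of_eq_inl hg) (fun _ hw => ne_of_mem_of_not_mem hw he) v.2

variable [DecidableEq V]

/-- The edges joining `v` to the clones of `i` in `A`. -/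
def spokes (v : {v : V // v ≠ i}) (A : Finset Bool) : Finset (Sym2 (Cloned i)) :=
  A.image fun t => s(Sum.inr t, Sum.inl v)

/-- The clones of `i` joined to `v` in the configuration `x'`. -/
def joinedClones (v : {v : V // v ≠ i}) (x' : Finset (Sym2 (Cloned i))) : Finset Bool :=
  {t | s(Sum.inr t, Sum.inl v) ∈ x'}

/-- The configuration on the cloned graph with the coordinates `(x, A, B, c)`: the image of `x`,
the edges from `j` to the clones in `A` and from `k` to the clones in `B`, and, if `c` holds, the
bridge between the clones. -/
def cloneConfig (g : V → Cloned i) (j k : {v : V // v ≠ i}) (x : Finset (Sym2 V))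
    (A B : Finset Bool) (c : Bool) : Finset (Sym2 (Cloned i)) :=
  x.image (Sym2.map g) ∪ (spokes j A ∪ (spokes k B ∪
    if c then {s(Sum.inr false, Sum.inr true)} else ∅))

/-- The configuration `X` on the original graph induced by the configuration `X' = x'` on the
cloned graph. -/
def cloneProj (E : Finset (Sym2 V)) (g : V → Cloned i) (j k : {v : V // v ≠ i})
    (x' : Finset (Sym2 (Cloned i))) : Finset (Sym2 V) :=
  {e ∈ E | i ∉ e ∧ Sym2.map g e ∈ x'} ∪
    (if s(Sum.inr false, Sum.inl j) ∈ x' ↔ s(Sum.inr true, Sum.inl j) ∈ x'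
      then ∅ else {s(i, (j : V))}) ∪
    (if s(Sum.inr false, Sum.inl k) ∈ x' ↔ s(Sum.inr true, Sum.inl k) ∈ x'
      then ∅ else {s(i, (k : V))})

variable {j k : {v : V // v ≠ i}} {E x : Finset (Sym2 V)} {A B : Finset Bool} {c : Bool}
  {x' : Finset (Sym2 (Cloned i))}

theorem mem_cloneConfig {e : Sym2 (Cloned i)} :
    e ∈ cloneConfig g j k x A B c ↔ (∃ f ∈ x, Sym2.map g f = e) ∨
      (∃ t ∈ A, s(Sum.inr t, Sum.inl j) = e) ∨ (∃ t ∈ B, s(Sum.inr t, Sum.inl k) = e) ∨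
      (c = true ∧ e = s(Sum.inr false, Sum.inr true)) := by
  cases c <;> simp only [cloneConfig, spokes, mem_union, mem_image, if_true, Bool.false_eq_true,
    if_false, mem_singleton, notMem_empty, false_and, true_and]

theorem sym2Map_mem_cloneConfig (hg : ∀ v : {v : V // v ≠ i}, g v = Sum.inl v)
    (hx : ∀ e ∈ x, i ∉ e) {e : Sym2 V} (he : i ∉ e) :
    Sym2.map g e ∈ cloneConfig g j k x A B c ↔ e ∈ x := by
  have hne := sym2Map_ne_mk_inr hg he
  simp only [mem_cloneConfig, hne, (hne _ _).symm, and_false, exists_false, or_false]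
  exact ⟨fun ⟨f, hf, hfe⟩ => (sym2Map_eq_iff hg (hx f hf) he).1 hfe ▸ hf, fun h => ⟨e, h, rfl⟩⟩

theorem mk_inr_mem_cloneConfig (hg : ∀ v : {v : V // v ≠ i}, g v = Sum.inl v)
    (hx : ∀ e ∈ x, i ∉ e) (t : Bool) (w : Cloned i) :
    s(Sum.inr t, w) ∈ cloneConfig g j k x A B c ↔
      (t ∈ A ∧ w = Sum.inl j) ∨ (t ∈ B ∧ w = Sum.inl k) ∨ (c = true ∧ w = Sum.inr !t) := by
  have hcore : ¬∃ f ∈ x, Sym2.map g f = s(Sum.inr t, w) :=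
    fun ⟨f, hf, h⟩ => sym2Map_ne_mk_inr hg (hx f hf) t w h
  simp only [mem_cloneConfig, hcore, false_or]
  cases t <;> cases w <;> simp [eq_comm]

theorem joinedClones_cloneConfig_left (hg : ∀ v : {v : V // v ≠ i}, g v = Sum.inl v)
    (hjk : j ≠ k) (hx : ∀ e ∈ x, i ∉ e) : joinedClones j (cloneConfig g j k x A B c) = A := by
  ext t
  simp [joinedClones, mk_inr_mem_cloneConfig hg hx, hjk]

theorem joinedClones_cloneConfig_right (hg : ∀ v : {v : V // v ≠ i}, g v = Sum.inl v)
    (hjk : j ≠ k) (hx : ∀ e ∈ x, i ∉ e) : joinedClones k (cloneConfig g j k x A B c) = B := by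
  ext t
  simp [joinedClones, mk_inr_mem_cloneConfig hg hx, hjk.symm]

theorem bridge_mem_cloneConfig (hg : ∀ v : {v : V // v ≠ i}, g v = Sum.inl v)
    (hx : ∀ e ∈ x, i ∉ e) :
    s(Sum.inr false, Sum.inr true) ∈ cloneConfig g j k x A B c ↔ c = true := by
  simp [mk_inr_mem_cloneConfig hg hx]

theorem cloneConfig_subset_cloneConfig_univ (hxE : x ⊆ E) :
    cloneConfig g j k x A B c ⊆ cloneConfig g j k E univ univ true := by
  intro e
  simp only [mem_cloneConfig, mem_univ, true_and]
  grind

theorem cloneConfig_joinedClones (hx' : x' ⊆ cloneConfig g j k E univ univ true) :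
    cloneConfig g j k {e ∈ E | Sym2.map g e ∈ x'} (joinedClones j x') (joinedClones k x')
      (s(Sum.inr false, Sum.inr true) ∈ x') = x' := by
  ext e
  have := @hx' e
  simp only [mem_cloneConfig, joinedClones, mem_filter, mem_univ, true_and, decide_eq_true_eq]
    at this ⊢
  grind

theorem cloneConfig_univ_eq (hE : ∀ e ∈ E, i ∈ e → e = s(i, (j : V)) ∨ e = s(i, (k : V))) :
    cloneConfig g j k {e ∈ E | i ∉ e} univ univ true =
      (E \ {s(i, (j : V)), s(i, (k : V))}).image (Sym2.map g) ∪
        {s(Sum.inr false, Sum.inl j), s(Sum.inr true, Sum.inl j),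
         s(Sum.inr false, Sum.inl k), s(Sum.inr true, Sum.inl k),
         s(Sum.inr false, Sum.inr true)} := by
  have hcore : {e ∈ E | i ∉ e} = E \ {s(i, (j : V)), s(i, (k : V))} := by
    ext e
    simp only [mem_filter, mem_sdiff, mem_insert, mem_singleton]
    refine and_congr_right fun he => not_congr ⟨hE e he, ?_⟩
    rintro (rfl | rfl) <;> exact Sym2.mem_mk_left _ _
  rw [hcore]
  ext e
  simp only [mem_cloneConfig, mem_union, mem_image, mem_insert, mem_singleton, mem_univ,
    true_and, Bool.exists_bool, or_assoc, eq_comm (b := e)]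

theorem mem_cloneProj {e : Sym2 V} :
    e ∈ cloneProj E g j k x' ↔ (e ∈ E ∧ i ∉ e ∧ Sym2.map g e ∈ x') ∨
      (Odd #(joinedClones j x') ∧ e = s(i, (j : V))) ∨
      (Odd #(joinedClones k x') ∧ e = s(i, (k : V))) := by
  simp only [cloneProj, joinedClones, odd_card_filter_bool, mem_union, mem_filter, or_assoc]
  refine or_congr Iff.rfl (or_congr ?_ ?_) <;> split_ifs with h <;> simp [h]

theorem cloneProj_subset (hj : s(i, (j : V)) ∈ E) (hk : s(i, (k : V)) ∈ E) :
    cloneProj E g j k x' ⊆ E := by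
  intro e
  rw [mem_cloneProj]
  rintro (⟨he, -⟩ | ⟨-, rfl⟩ | ⟨-, rfl⟩) <;> assumption

theorem cloneProj_eq_iff (hjk : j ≠ k)
    (hE : ∀ e ∈ E, i ∈ e → e = s(i, (j : V)) ∨ e = s(i, (k : V))) (hxE : x ⊆ E) :
    cloneProj E g j k x' = x ↔
      {e ∈ E | i ∉ e ∧ Sym2.map g e ∈ x'} = {e ∈ x | i ∉ e} ∧
        (Odd #(joinedClones j x') ↔ s(i, (j : V)) ∈ x) ∧
        (Odd #(joinedClones k x') ↔ s(i, (k : V)) ∈ x) := by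
  have hne : s(i, (j : V)) ≠ s(i, (k : V)) := by
    rwa [Ne, Sym2.congr_right, Subtype.coe_inj]
  have hij : i ∈ s(i, (j : V)) := Sym2.mem_mk_left _ _
  have hik : i ∈ s(i, (k : V)) := Sym2.mem_mk_left _ _
  simp only [Finset.ext_iff, mem_cloneProj, mem_filter]
  grind

@[to_additive]
theorem prod_cloneConfig {M : Type*} [CommMonoid M]
    (hg : ∀ v : {v : V // v ≠ i}, g v = Sum.inl v) (hjk : j ≠ k) (hx : ∀ e ∈ x, i ∉ e)
    (f : Sym2 (Cloned i) → M) :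
    ∏ e ∈ cloneConfig g j k x A B c, f e = (∏ e ∈ x, f (Sym2.map g e)) *
      ((∏ t ∈ A, f s(Sum.inr t, Sum.inl j)) * ((∏ t ∈ B, f s(Sum.inr t, Sum.inl k)) *
        if c then f s(Sum.inr false, Sum.inr true) else 1)) := by
  have hspokes (v : {v : V // v ≠ i}) (D : Finset Bool) :
      ∏ e ∈ spokes v D, f e = ∏ t ∈ D, f s(Sum.inr t, Sum.inl v) :=
    prod_image fun s _ t _ h => by simpa using h
  have himage : ∏ e ∈ x.image (Sym2.map g), f e = ∏ e ∈ x, f (Sym2.map g e) :=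
    prod_image fun e he e' he' => (sym2Map_eq_iff hg (hx e he) (hx e' he')).1
  rw [cloneConfig, prod_union, prod_union, prod_union, himage, hspokes, hspokes,
    apply_ite (∏ e ∈ ·, f e), prod_singleton, prod_empty]
  · rw [disjoint_left, spokes, forall_mem_image]
    cases c <;> simp
  · rw [disjoint_left, spokes, forall_mem_image]
    cases c <;> simp [spokes, hjk.symm]
  · rw [disjoint_left, forall_mem_image]
    intro e he
    have hne := sym2Map_ne_mk_inr hg (hx e he)
    cases c <;> simp [spokes, hne, (hne _ _).symm]

theorem degU5_cloneConfig_inl (hg : ∀ v : {v : V // v ≠ i}, g v = Sum.inl v) (hjk : j ≠ k)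
    (hx : ∀ e ∈ x, i ∉ e) (v : {v : V // v ≠ i}) :
    degU5 (cloneConfig g j k x A B c) (Sum.inl v) =
      degU5 x v + ((if v = j then #A else 0) + (if v = k then #B else 0)) := by
  rw [degU5_eq_sum, sum_cloneConfig hg hjk hx, degU5_eq_sum,
    sum_congr rfl fun e he => if_congr (inl_mem_sym2Map_iff hg (hx e he) v) rfl rfl]
  simp

theorem degU5_cloneConfig_inr (hg : ∀ v : {v : V // v ≠ i}, g v = Sum.inl v) (hjk : j ≠ k)
    (hx : ∀ e ∈ x, i ∉ e) (t : Bool) :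
    degU5 (cloneConfig g j k x A B c) (Sum.inr t) =
      (if t ∈ A then 1 else 0) + ((if t ∈ B then 1 else 0) + if c then 1 else 0) := by
  rw [degU5_eq_sum, sum_cloneConfig hg hjk hx,
    sum_eq_zero fun e he => if_neg (inr_notMem_sym2Map hg (hx e he) t)]
  cases t <;> simp

theorem odd_degU5_cloneConfig_inl_iff (hg : ∀ v : {v : V // v ≠ i}, g v = Sum.inl v)
    (hjk : j ≠ k) (hx : ∀ e ∈ x, i ∈ e → e = s(i, (j : V)) ∨ e = s(i, (k : V)))
    (hA : Odd #A ↔ s(i, (j : V)) ∈ x) (hB : Odd #B ↔ s(i, (k : V)) ∈ x)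
    (v : {v : V // v ≠ i}) :
    Odd (degU5 (cloneConfig g j k {e ∈ x | i ∉ e} A B c) (Sum.inl v)) ↔ Odd (degU5 x v) := by
  rw [degU5_cloneConfig_inl hg hjk fun e he => (mem_filter.1 he).2,
    degU5_of_ne_center (Subtype.coe_ne_coe.2 hjk) hx v.2]
  simp only [← hA, ← hB, Subtype.coe_inj]
  grind

theorem filter_odd_degU5_cloneConfig_inr (hg : ∀ v : {v : V // v ≠ i}, g v = Sum.inl v)
    (hjk : j ≠ k) (hx : ∀ e ∈ x, i ∉ e) :
    ({t | Odd (degU5 (cloneConfig g j k x A B c) (Sum.inr t))} : Finset Bool) =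
      if c then (A ∆ B)ᶜ else A ∆ B := by
  ext t
  rw [mem_filter_univ, degU5_cloneConfig_inr hg hjk hx]
  by_cases hA : t ∈ A <;> by_cases hB : t ∈ B <;> cases c <;>
    simp [mem_symmDiff, hA, hB, Nat.odd_iff]

theorem sum_cloneProj_fiber_eq_sum_coordinates {M : Type*} [AddCommMonoid M]
    (hg : ∀ v : {v : V // v ≠ i}, g v = Sum.inl v) (hjk : j ≠ k)
    (hE : ∀ e ∈ E, i ∈ e → e = s(i, (j : V)) ∨ e = s(i, (k : V))) (hxE : x ⊆ E)
    (f : Finset (Sym2 (Cloned i)) → M) :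
    ∑ x' ∈ (cloneConfig g j k {e ∈ E | i ∉ e} univ univ true).powerset with
        cloneProj E g j k x' = x, f x' =
      ∑ p : Finset Bool × Finset Bool × Bool with
        (Odd #p.1 ↔ s(i, (j : V)) ∈ x) ∧ (Odd #p.2.1 ↔ s(i, (k : V)) ∈ x),
        f (cloneConfig g j k {e ∈ x | i ∉ e} p.1 p.2.1 p.2.2) := by
  have havoid : ∀ e ∈ {e ∈ x | i ∉ e}, i ∉ e := fun e he => (mem_filter.1 he).2
  have hinv {x'} (hx' : x' ⊆ cloneConfig g j k {e ∈ E | i ∉ e} univ univ true)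
      (hproj : cloneProj E g j k x' = x) :
      cloneConfig g j k {e ∈ x | i ∉ e} (joinedClones j x') (joinedClones k x')
        (s(Sum.inr false, Sum.inr true) ∈ x') = x' := by
    rw [← ((cloneProj_eq_iff hjk hE hxE).1 hproj).1, ← filter_filter]
    exact cloneConfig_joinedClones hx'
  refine sum_nbij'
    (fun x' => (joinedClones j x', joinedClones k x',
      decide (s(Sum.inr false, Sum.inr true) ∈ x')))
    (fun p => cloneConfig g j k {e ∈ x | i ∉ e} p.1 p.2.1 p.2.2) ?_ ?_ ?_ ?_ ?_
  · intro x' hx'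
    rw [mem_filter, cloneProj_eq_iff hjk hE hxE] at hx'
    exact mem_filter.2 ⟨mem_univ _, hx'.2.2⟩
  · intro p hp
    rw [mem_filter, mem_powerset, cloneProj_eq_iff hjk hE hxE,
      joinedClones_cloneConfig_left hg hjk havoid, joinedClones_cloneConfig_right hg hjk havoid]
    refine ⟨cloneConfig_subset_cloneConfig_univ (filter_subset_filter _ hxE), ?_,
      (mem_filter.1 hp).2⟩
    ext e
    simp only [mem_filter]
    grind [sym2Map_mem_cloneConfig]
  · intro x' hx'
    rw [mem_filter, mem_powerset] at hx'
    exact hinv hx'.1 hx'.2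
  · intro p _
    simp [joinedClones_cloneConfig_left hg hjk havoid,
      joinedClones_cloneConfig_right hg hjk havoid, bridge_mem_cloneConfig hg havoid]
  · intro x' hx'
    rw [mem_filter, mem_powerset] at hx'
    rw [hinv hx'.1 hx'.2]

variable [Fintype V] {lam : Sym2 V → ℝ} {mu : V → ℝ} {lam' : Sym2 (Cloned i) → ℝ}
  {mu' : Cloned i → ℝ} {l1 l2 m : ℝ}

theorem wSubs5_cloneConfig (hg : ∀ v : {v : V // v ≠ i}, g v = Sum.inl v) (hjk : j ≠ k)
    (hx : ∀ e ∈ x, i ∈ e → e = s(i, (j : V)) ∨ e = s(i, (k : V)))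
    (hlam : ∀ e ∈ x, i ∉ e → lam' (Sym2.map g e) = lam e)
    (hl1 : ∀ t, lam' s(Sum.inr t, Sum.inl j) = l1) (hl2 : ∀ t, lam' s(Sum.inr t, Sum.inl k) = l2)
    (hbridge : lam' s(Sum.inr false, Sum.inr true) = 1)
    (hmu : ∀ v : {v : V // v ≠ i}, mu' (Sum.inl v) = mu v) (hm : ∀ t, mu' (Sum.inr t) = m)
    (hA : Odd #A ↔ s(i, (j : V)) ∈ x) (hB : Odd #B ↔ s(i, (k : V)) ∈ x) :
    wSubs5 lam' mu' (cloneConfig g j k {e ∈ x | i ∉ e} A B c) =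
      weightAway i lam mu x * (l1 ^ #A * l2 ^ #B * m ^ #(if c then (A ∆ B)ᶜ else A ∆ B)) := by
  have havoid : ∀ e ∈ {e ∈ x | i ∉ e}, i ∉ e := fun e he => (mem_filter.1 he).2
  have hedges : ∏ e ∈ cloneConfig g j k {e ∈ x | i ∉ e} A B c, lam' e =
      (∏ e ∈ x with i ∉ e, lam e) * (l1 ^ #A * l2 ^ #B) := by
    rw [prod_cloneConfig hg hjk havoid,
      prod_congr rfl fun e he => hlam e (mem_filter.1 he).1 (havoid e he)]
    simp [hl1, hl2, hbridge]
  have hclones : ∏ t : Bool, (if Odd (degU5 (cloneConfig g j k {e ∈ x | i ∉ e} A B c)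
      (Sum.inr t)) then mu' (Sum.inr t) else 1) = m ^ #(if c then (A ∆ B)ᶜ else A ∆ B) := by
    rw [← prod_filter, filter_odd_degU5_cloneConfig_inr hg hjk havoid,
      prod_congr rfl fun t _ => hm t, prod_const]
  rw [wSubs5_eq_prod_ite, Fintype.prod_sum_type, hedges, hclones, weightAway]
  simp only [odd_degU5_cloneConfig_inl_iff hg hjk hx hA hB, hmu]
  ring

theorem sum_wSubs5_cloneProj_fiber (hg : ∀ v : {v : V // v ≠ i}, g v = Sum.inl v) (hjk : j ≠ k)
    (hE : ∀ e ∈ E, i ∈ e → e = s(i, (j : V)) ∨ e = s(i, (k : V))) (hxE : x ⊆ E)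
    (heq1 : 2 * l1 / (1 + l1 ^ 2) = lam s(i, (j : V)))
    (heq2 : 2 * l2 / (1 + l2 ^ 2) = lam s(i, (k : V)))
    (heq3 : 2 * m / (1 + m ^ 2) = mu i)
    (hlam : ∀ e ∈ E, i ∉ e → lam' (Sym2.map g e) = lam e)
    (hl1 : ∀ t, lam' s(Sum.inr t, Sum.inl j) = l1) (hl2 : ∀ t, lam' s(Sum.inr t, Sum.inl k) = l2)
    (hbridge : lam' s(Sum.inr false, Sum.inr true) = 1)
    (hmu : ∀ v : {v : V // v ≠ i}, mu' (Sum.inl v) = mu v) (hm : ∀ t, mu' (Sum.inr t) = m) :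
    ∑ x' ∈ (cloneConfig g j k {e ∈ E | i ∉ e} univ univ true).powerset with
        cloneProj E g j k x' = x, wSubs5 lam' mu' x' =
      (1 + l1 ^ 2) * (1 + l2 ^ 2) * (1 + m ^ 2) * wSubs5 lam mu x := by
  have hx : ∀ e ∈ x, i ∈ e → e = s(i, (j : V)) ∨ e = s(i, (k : V)) := fun e he => hE e (hxE he)
  have hweight {p : Finset Bool × Finset Bool × Bool} (hp : p ∈ ({p |
      (Odd #p.1 ↔ s(i, (j : V)) ∈ x) ∧ (Odd #p.2.1 ↔ s(i, (k : V)) ∈ x)} : Finset _)) :=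
    wSubs5_cloneConfig (c := p.2.2) hg hjk hx (fun e he => hlam e (hxE he)) hl1 hl2 hbridge hmu
      hm (mem_filter.1 hp).2.1 (mem_filter.1 hp).2.2
  rw [sum_cloneProj_fiber_eq_sum_coordinates hg hjk hE hxE, sum_congr rfl fun p => hweight,
    ← mul_sum, sum_pow_card_clones, ite_two_mul_eq_mul_ite heq1,
    ite_two_mul_eq_mul_ite heq2, ite_two_mul_eq_mul_ite heq3,
    wSubs5_eq_weightAway_mul (Subtype.coe_ne_coe.2 hjk) hx]
  ring

end Clone

-- For signed weights the partition functions may vanish; both sides are then `0` by `x / 0 = 0`.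
theorem stmt5_general {V : Type*} [Fintype V] [DecidableEq V]
    (E : Finset (Sym2 V))
    (lam : Sym2 V → ℝ) (mu : V → ℝ)
    (i j k : V) (hjk : j ≠ k) (hij : i ≠ j) (hik : i ≠ k)
    (hej : s(i, j) ∈ E) (hek : s(i, k) ∈ E)
    (hdeg2 : (E.filter (fun e => i ∈ e)).card = 2)
    (l1 l2 m1 : ℝ)
    (heq1 : 2 * l1 / (1 + l1 ^ 2) = lam s(i, j))
    (heq2 : 2 * l2 / (1 + l2 ^ 2) = lam s(i, k))
    (heq3 : 2 * m1 / (1 + m1 ^ 2) = mu i)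
    (g : V → {v : V // v ≠ i} ⊕ Bool)
    (hg : ∀ (v : V) (h : v ≠ i), g v = Sum.inl ⟨v, h⟩)
    (E' : Finset (Sym2 ({v : V // v ≠ i} ⊕ Bool)))
    (hE' : E' = (E \ {s(i, j), s(i, k)}).image (Sym2.map g) ∪
      {s(Sum.inr false, g j), s(Sum.inr true, g j),
       s(Sum.inr false, g k), s(Sum.inr true, g k),
       s(Sum.inr false, Sum.inr true)})
    (lam' : Sym2 ({v : V // v ≠ i} ⊕ Bool) → ℝ)
    (hlam'0 : ∀ e ∈ E, i ∉ e → lam' (Sym2.map g e) = lam e)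
    (hlam'j : lam' s(Sum.inr false, g j) = l1 ∧ lam' s(Sum.inr true, g j) = l1)
    (hlam'k : lam' s(Sum.inr false, g k) = l2 ∧ lam' s(Sum.inr true, g k) = l2)
    (hlam'c : lam' s(Sum.inr false, Sum.inr true) = 1)
    (mu' : {v : V // v ≠ i} ⊕ Bool → ℝ)
    (hmu'1 : ∀ (v : V) (h : v ≠ i), mu' (Sum.inl ⟨v, h⟩) = mu v)
    (hmu'2 : ∀ b : Bool, mu' (Sum.inr b) = m1) :
    ∀ x ∈ E.powerset,
      (∑ x' ∈ E'.powerset.filter (fun x' =>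
            (E.filter (fun e => i ∉ e ∧ Sym2.map g e ∈ x')) ∪
              (if (s(Sum.inr false, g j) ∈ x') ↔ (s(Sum.inr true, g j) ∈ x')
                then (∅ : Finset (Sym2 V)) else {s(i, j)}) ∪
              (if (s(Sum.inr false, g k) ∈ x') ↔ (s(Sum.inr true, g k) ∈ x')
                then (∅ : Finset (Sym2 V)) else {s(i, k)}) = x),
          wSubs5 lam' mu' x') /
        (∑ y' ∈ E'.powerset, wSubs5 lam' mu' y')
      = wSubs5 lam mu x / (∑ y ∈ E.powerset, wSubs5 lam mu y) := by
  lift j to {v : V // v ≠ i} using hij.symm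
  lift k to {v : V // v ≠ i} using hik.symm
  replace hg (v : {v : V // v ≠ i}) : g v = Sum.inl v := hg v v.2
  have hE := eq_or_eq_of_card_filter_mem_eq_two hjk hej hek hdeg2
  simp only [hg] at hE' hlam'j hlam'k ⊢
  rw [← cloneConfig_univ_eq hE] at hE'
  subst hE'
  have hmaps : ∀ x' ∈ (cloneConfig g j k {e ∈ E | i ∉ e} univ univ true).powerset,
      cloneProj E g j k x' ∈ E.powerset := fun x' _ => mem_powerset.2 (cloneProj_subset hej hek)
  have hfiber := fun x (hx : x ∈ E.powerset) =>
    sum_wSubs5_cloneProj_fiber hg (Subtype.coe_ne_coe.1 hjk) hE (mem_powerset.1 hx) heq1 heq2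
      heq3 hlam'0 (Bool.forall_bool.2 hlam'j) (Bool.forall_bool.2 hlam'k)
      hlam'c (fun v => hmu'1 v v.2) hmu'2
  exact fun x hx => sum_fiber_div_sum_eq hmaps (by positivity) hfiber hx

/-- Cloning a degree-2 node `i` with incident edges `{i,j}` and
`{i,k}`: replace `i` by two nodes `i', i''` (modeled as `Sum.inr false`,
`Sum.inr true` in `{v // v ≠ i} ⊕ Bool`) joined by an edge of weight 1,
each joined to `j` with weight `λ1` and to `k` with weight `λ2`, where
`2λ1/(1+λ1²) = λ({i,j})`, `2λ2/(1+λ2²) = λ({i,k})`, `2μ1/(1+μ1²) = μ(i)`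
and `μ'(i') = μ'(i'') = μ1`.  Drawing `X' ∼ π_subs` on `G'` and setting
`X(e) = X'(e)` off `i`, `X({i,j}) = X'({i',j}) + X'({i'',j}) mod 2`,
`X({i,k}) = X'({i',k}) + X'({i'',k}) mod 2` yields `X ∼ π_subs` on `G`. -/
theorem stmt5 {V : Type*} [Fintype V] [DecidableEq V]
    (E : Finset (Sym2 V)) (hE : ∀ e ∈ E, ¬ e.IsDiag)
    (lam : Sym2 V → ℝ) (mu : V → ℝ)
    (hlam : ∀ e ∈ E, lam e ∈ Set.Icc (0 : ℝ) 1)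
    (hmu : ∀ v : V, mu v ∈ Set.Icc (0 : ℝ) 1)
    (i j k : V) (hjk : j ≠ k) (hij : i ≠ j) (hik : i ≠ k)
    (hej : s(i, j) ∈ E) (hek : s(i, k) ∈ E)
    (hdeg2 : (E.filter (fun e => i ∈ e)).card = 2)
    -- the solutions of the weight equations
    (l1 l2 m1 : ℝ)
    (hl1 : l1 ∈ Set.Icc (0 : ℝ) 1) (hl2 : l2 ∈ Set.Icc (0 : ℝ) 1)
    (hm1 : m1 ∈ Set.Icc (0 : ℝ) 1)
    (heq1 : 2 * l1 / (1 + l1 ^ 2) = lam s(i, j))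
    (heq2 : 2 * l2 / (1 + l2 ^ 2) = lam s(i, k))
    (heq3 : 2 * m1 / (1 + m1 ^ 2) = mu i)
    -- the embedding of the surviving vertices into the new vertex type
    (g : V → {v : V // v ≠ i} ⊕ Bool)
    (hg : ∀ (v : V) (h : v ≠ i), g v = Sum.inl ⟨v, h⟩)
    -- the new edge set
    (E' : Finset (Sym2 ({v : V // v ≠ i} ⊕ Bool)))
    (hE' : E' = (E \ {s(i, j), s(i, k)}).image (Sym2.map g) ∪
      {s(Sum.inr false, g j), s(Sum.inr true, g j),
       s(Sum.inr false, g k), s(Sum.inr true, g k),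
       s(Sum.inr false, Sum.inr true)})
    -- the new edge weights
    (lam' : Sym2 ({v : V // v ≠ i} ⊕ Bool) → ℝ)
    (hlam'0 : ∀ e ∈ E, i ∉ e → lam' (Sym2.map g e) = lam e)
    (hlam'j : lam' s(Sum.inr false, g j) = l1 ∧ lam' s(Sum.inr true, g j) = l1)
    (hlam'k : lam' s(Sum.inr false, g k) = l2 ∧ lam' s(Sum.inr true, g k) = l2)
    (hlam'c : lam' s(Sum.inr false, Sum.inr true) = 1)
    -- the new node weights
    (mu' : {v : V // v ≠ i} ⊕ Bool → ℝ)
    (hmu'1 : ∀ (v : V) (h : v ≠ i), mu' (Sum.inl ⟨v, h⟩) = mu v)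
    (hmu'2 : ∀ b : Bool, mu' (Sum.inr b) = m1) :
    ∀ x ∈ E.powerset,
      (∑ x' ∈ E'.powerset.filter (fun x' =>
            (E.filter (fun e => i ∉ e ∧ Sym2.map g e ∈ x')) ∪
              (if (s(Sum.inr false, g j) ∈ x') ↔ (s(Sum.inr true, g j) ∈ x')
                then (∅ : Finset (Sym2 V)) else {s(i, j)}) ∪
              (if (s(Sum.inr false, g k) ∈ x') ↔ (s(Sum.inr true, g k) ∈ x')
                then (∅ : Finset (Sym2 V)) else {s(i, k)}) = x),
          wSubs5 lam' mu' x') /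
        (∑ y' ∈ E'.powerset, wSubs5 lam' mu' y')
      = wSubs5 lam mu x / (∑ y ∈ E.powerset, wSubs5 lam mu y) := by
  exact stmt5_general E lam mu i j k hjk hij hik hej hek hdeg2 l1 l2 m1 heq1 heq2 heq3 g hg E' hE'
    lam' hlam'0 hlam'j hlam'k hlam'c mu' hmu'1 hmu'2
end

section
/- Let G = (V,E) be a finite simple graph in which every node has degree exactly 3, with edge weights λ: E → [0,1] and node weights μ identically 0. For each node i with neighbors n(i,1), n(i,2), n(i,3), set A_i = {d_i, v_{i,n(i,1)}, v_{i,n(i,2)}, v_{i,n(i,3)}} (all new vertices) and let E_i be all 2-element subsets of A_i. Let G' = (V',E') with V' = ∪_{i∈V} A_i and E' = {{v_{ij}, v_{ji}} : {i,j} ∈ E} ∪ (∪_i E_i). Define edge weights λ' on G' by λ'({v_{ij},v_{ji}}) = λ({i,j}), λ'({d_i, v_{ij}}) = 1, and λ'({v_{ij}, v_{ik}}) = 1/3 for j ≠ k. Let φ({i,j}) = {v_{ij},v_{ji}}. Then the pushforward of the perfect-matching distribution π_permat on G' (with weights λ') under the map x' ↦ x'∘φ ∈ {0,1}^E equals the subgraphs-world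 distribution π_subs on G with parameters λ and μ ≡ 0. -/
/-- The degree of the vertex `v` under the configuration `x`. -/
def degU7 {W : Type*} [DecidableEq W] (x : Finset (Sym2 W)) (v : W) : ℕ :=
  (x.filter (fun e => v ∈ e)).card

/-- The subgraphs-world weight of a configuration `x`. -/
def wSubs7 {V : Type*} [Fintype V] [DecidableEq V]
    (lam : Sym2 V → ℝ) (mu : V → ℝ) (x : Finset (Sym2 V)) : ℝ :=
  (∏ e ∈ x, lam e) *
    ∏ v ∈ Finset.univ.filter (fun v => Odd (degU7 x v)), mu v

/-- The perfect-matching weight of a configuration `x` relative to the vertex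
set `VS`: the product of its edge weights if every vertex of `VS` is incident
to exactly one edge of `x`, and `0` otherwise. -/
def wPerMat7 {W : Type*} [DecidableEq W] (VS : Finset W)
    (lam : Sym2 W → ℝ) (x : Finset (Sym2 W)) : ℝ :=
  if ∀ v ∈ VS, degU7 x v = 1 then ∏ e ∈ x, lam e else 0

/-- The edge correspondence `φ({i,j}) = {v_{ij}, v_{ji}}`, where the new
vertex `v_{ij}` is modeled as `Sum.inr (i,j) : V ⊕ V × V`. -/
def phi7 {V : Type*} : Sym2 V → Sym2 (V ⊕ V × V) :=
  Sym2.lift ⟨fun a b => s(Sum.inr (a, b), Sum.inr (b, a)),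
    fun _ _ => Sym2.eq_swap⟩

/-- The gadget vertices for the original node `i`:
`A_i = {d_i, v_{i,n(i,1)}, v_{i,n(i,2)}, v_{i,n(i,3)}}`, with `d_i`
modeled as `Sum.inl i`. -/
def gadgetVerts7 {V : Type*} [Fintype V] [DecidableEq V]
    (E : Finset (Sym2 V)) (i : V) : Finset (V ⊕ V × V) :=
  insert (Sum.inl i)
    ((Finset.univ.filter (fun j => s(i, j) ∈ E)).image (fun j => Sum.inr (i, j)))

/-- The gadget edges `E_i`: all 2-element subsets of `A_i`. -/
def gadgetEdges7 {V : Type*} [Fintype V] [DecidableEq V]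
    (E : Finset (Sym2 V)) (i : V) : Finset (Sym2 (V ⊕ V × V)) :=
  ((gadgetVerts7 E i ×ˢ gadgetVerts7 E i).filter (fun p => p.1 ≠ p.2)).image
    (fun p => s(p.1, p.2))

/-!
Fix the set `x` of edges of `G` that a perfect matching of `G'` uses between different gadgets. What
remains is to match, inside the gadget of each node `i`, the vertex `d_i` and the `v_{ij}` with
`{i,j} ∉ x`, independently for different nodes, so the weight of `x` is `∏_{e ∈ x} λ(e)` times a
product of hafnians. Expanding such a hafnian along `d_i` shows that it is `1` if the number of free
`v_{ij}` is odd (`1` or `3`) and `0` otherwise. The degree of `i` in `G` being odd, this is the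
indicator that `i` has even degree under `x`, which is what `μ ≡ 0` imposes in the subgraphs world.
-/

open Finset

section Degree

variable {W : Type*} [DecidableEq W]

lemma degU7_union {y z : Finset (Sym2 W)} (h : Disjoint y z) (v : W) :
    degU7 (y ∪ z) v = degU7 y v + degU7 z v := by
  rw [degU7, filter_union, card_union_of_disjoint (disjoint_filter_filter h), degU7, degU7]

lemma degU7_insert {e : Sym2 W} {y : Finset (Sym2 W)} (he : e ∉ y) (v : W) :
    degU7 (insert e y) v = degU7 y v + if v ∈ e then 1 else 0 := by
  unfold degU7
  split_ifs with hv
  · rw [filter_insert, if_pos hv, card_insert_of_notMem fun h => he (mem_filter.1 h).1]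
  · rw [filter_insert, if_neg hv, add_zero]

lemma degU7_pos {y : Finset (Sym2 W)} {v : W} : 0 < degU7 y v ↔ ∃ e ∈ y, v ∈ e := by
  simp only [degU7, card_pos, Finset.Nonempty, mem_filter]

lemma degU7_eq_card_neighbors [Fintype W] (y : Finset (Sym2 W)) (v : W) :
    degU7 y v = #{u | s(v, u) ∈ y} := by
  rw [degU7, ← card_image_of_injective _ fun a b => (Sym2.congr_right (a := v)).1]
  congr 1
  ext e
  simp only [mem_filter, mem_image, mem_univ, true_and]
  constructor
  · rintro ⟨he, u, rfl⟩
    exact ⟨u, he, rfl⟩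
  · rintro ⟨u, hu, rfl⟩
    exact ⟨hu, Sym2.mem_mk_left v u⟩

end Degree

section Hafnian

variable {W : Type*} [DecidableEq W]

/-- The edges of the complete graph on `R`, i.e. its two-element subsets. -/
def completeEdges (R : Finset W) : Finset (Sym2 W) :=
  {e ∈ R.sym2 | ¬ e.IsDiag}

/-- The perfect matchings of the complete graph on `R`, as sets of edges. -/
def perfectMatchings (R : Finset W) : Finset (Finset (Sym2 W)) :=
  {y ∈ (completeEdges R).powerset | ∀ v ∈ R, degU7 y v = 1}

/-- The hafnian of the edge weights `w` on the vertex set `R`: the total weight of the perfect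
matchings of the complete graph on `R`. -/
def hafnian {K : Type*} [CommSemiring K] (w : Sym2 W → K) (R : Finset W) : K :=
  ∑ y ∈ perfectMatchings R, ∏ e ∈ y, w e

lemma mem_completeEdges {R : Finset W} {e : Sym2 W} :
    e ∈ completeEdges R ↔ (∀ v ∈ e, v ∈ R) ∧ ¬ e.IsDiag := by
  rw [completeEdges, mem_filter, mem_sym2_iff]

lemma completeEdges_mono {R S : Finset W} (h : R ⊆ S) : completeEdges R ⊆ completeEdges S :=
  filter_subset_filter _ (sym2_mono h)

lemma disjoint_completeEdges {R S : Finset W} (h : Disjoint R S) :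
    Disjoint (completeEdges R) (completeEdges S) := by
  refine disjoint_left.2 fun e hR hS => ?_
  have hv := e.out_fst_mem
  exact disjoint_left.1 h ((mem_completeEdges.1 hR).1 _ hv) ((mem_completeEdges.1 hS).1 _ hv)

lemma degU7_eq_zero_of_subset_completeEdges {R : Finset W} {y : Finset (Sym2 W)}
    (hy : y ⊆ completeEdges R) {v : W} (hv : v ∉ R) : degU7 y v = 0 := by
  by_contra h
  obtain ⟨e, he, hve⟩ := degU7_pos.1 (Nat.pos_of_ne_zero h)
  exact hv ((mem_completeEdges.1 (hy he)).1 v hve)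

lemma mem_perfectMatchings {R : Finset W} {y : Finset (Sym2 W)} :
    y ∈ perfectMatchings R ↔
      (∀ e ∈ y, ¬ e.IsDiag) ∧ ∀ v, degU7 y v = if v ∈ R then 1 else 0 := by
  rw [perfectMatchings, mem_filter, mem_powerset]
  constructor
  · rintro ⟨hy, hdeg⟩
    refine ⟨fun e he => (mem_completeEdges.1 (hy he)).2, fun v => ?_⟩
    split_ifs with hv
    · exact hdeg v hv
    · exact degU7_eq_zero_of_subset_completeEdges hy hv
  · rintro ⟨hdiag, hdeg⟩
    refine ⟨fun e he => mem_completeEdges.2 ⟨fun v hv => ?_, hdiag e he⟩, fun v hv => ?_⟩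
    · by_contra hR
      exact (degU7_pos.2 ⟨e, he, hv⟩).ne' ((hdeg v).trans (if_neg hR))
    · exact (hdeg v).trans (if_pos hv)

lemma insert_mem_perfectMatchings_insert {a b : W} {R : Finset W} {y : Finset (Sym2 W)}
    (ha : a ∉ R) (hb : b ∈ R) (hy : s(a, b) ∉ y) :
    insert s(a, b) y ∈ perfectMatchings (insert a R) ↔ y ∈ perfectMatchings (R.erase b) := by
  have hab : a ≠ b := fun h => ha (h ▸ hb)
  rw [mem_perfectMatchings, mem_perfectMatchings, forall_mem_insert, Sym2.mk_isDiag_iff]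
  refine and_congr (and_iff_right hab) (forall_congr' fun v => ?_)
  rw [degU7_insert hy]
  simp only [Sym2.mem_iff, mem_insert, mem_erase]
  grind

lemma notMem_of_mem_perfectMatchings {a : W} {R : Finset W} {y : Finset (Sym2 W)}
    (hy : y ∈ perfectMatchings R) (ha : a ∉ R) (b : W) : s(a, b) ∉ y := fun h =>
  (degU7_pos.2 ⟨_, h, Sym2.mem_mk_left a b⟩).ne'
    (((mem_perfectMatchings.1 hy).2 a).trans (if_neg ha))

lemma exists_partner_of_mem_perfectMatchings {a : W} {R : Finset W} {y : Finset (Sym2 W)}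
    (hy : y ∈ perfectMatchings (insert a R)) : ∃ b ∈ R, s(a, b) ∈ y := by
  obtain ⟨hsub, hdeg⟩ := mem_filter.1 hy
  have hpos : 0 < degU7 y a := (hdeg a (mem_insert_self a R)).symm ▸ one_pos
  obtain ⟨_, he, b, rfl⟩ := degU7_pos.1 hpos
  obtain ⟨hmem, hdiag⟩ := mem_completeEdges.1 (mem_powerset.1 hsub he)
  have hab : b ≠ a := fun h => hdiag (Sym2.mk_isDiag_iff.2 h.symm)
  exact ⟨b, (mem_insert.1 (hmem b (Sym2.mem_mk_right a b))).resolve_left hab, he⟩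

section CommSemiring

variable {K : Type*} [CommSemiring K] (w : Sym2 W → K)

theorem hafnian_insert {a : W} {R : Finset W} (ha : a ∉ R) :
    hafnian w (insert a R) = ∑ b ∈ R, w s(a, b) * hafnian w (R.erase b) := by
  have ha' : ∀ b, a ∉ R.erase b := fun b h => ha (mem_of_mem_erase h)
  simp only [hafnian, mul_sum]
  rw [sum_sigma']
  symm
  refine sum_nbij (fun p => insert s(a, p.1) p.2) ?_ ?_ ?_ ?_
  · rintro ⟨b, y⟩ hp
    obtain ⟨hb, hy⟩ := mem_sigma.1 hp
    exact (insert_mem_perfectMatchings_insert ha hb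
      (notMem_of_mem_perfectMatchings hy (ha' b) b)).2 hy
  · rintro ⟨b, y⟩ hp ⟨b', y'⟩ hp' (h : insert s(a, b) y = insert s(a, b') y')
    have hy : ∀ u, s(a, u) ∉ y := notMem_of_mem_perfectMatchings (mem_sigma.1 hp).2 (ha' b)
    have hy' : ∀ u, s(a, u) ∉ y' := notMem_of_mem_perfectMatchings (mem_sigma.1 hp').2 (ha' b')
    obtain rfl : b = b' := by
      have hmem : s(a, b) ∈ insert s(a, b') y' := h ▸ mem_insert_self _ _
      exact Sym2.congr_right.1 ((mem_insert.1 hmem).resolve_right (hy' b))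
    rw [← erase_insert (hy b), h, erase_insert (hy' b)]
  · intro y hy
    obtain ⟨b, hb, he⟩ := exists_partner_of_mem_perfectMatchings hy
    refine ⟨⟨b, y.erase s(a, b)⟩, mem_sigma.2 ⟨hb, ?_⟩, insert_erase he⟩
    rwa [← insert_mem_perfectMatchings_insert ha hb (notMem_erase _ _), insert_erase he]
  · rintro ⟨b, y⟩ hp
    exact (prod_insert (notMem_of_mem_perfectMatchings (mem_sigma.1 hp).2 (ha' b) b)).symm

@[simp]
lemma hafnian_empty : hafnian w ∅ = 1 := by
  have h : perfectMatchings (∅ : Finset W) = {∅} := by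
    simp [perfectMatchings, completeEdges]
  rw [hafnian, h, sum_singleton, prod_empty]

@[simp]
lemma hafnian_singleton (a : W) : hafnian w {a} = 0 := by
  rw [← insert_empty_eq a, hafnian_insert w (notMem_empty a), sum_empty]

lemma hafnian_pair {a b : W} (h : a ≠ b) : hafnian w {a, b} = w s(a, b) := by
  rw [hafnian_insert w (notMem_singleton.2 h), sum_singleton, erase_singleton, hafnian_empty,
    mul_one]

variable {w}

/-- For `#T = 3` each of the three partners of `d` leaves a pair of weight `c`, whence the condition
`3 * c = 1`. -/
lemma hafnian_insert_of_card_le_three {d : W} {T : Finset W} (hd : d ∉ T) (hT : #T ≤ 3) {c : K}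
    (hc : 3 * c = 1) (hw_d : ∀ v ∈ T, w s(d, v) = 1)
    (hw_T : ∀ u ∈ T, ∀ v ∈ T, u ≠ v → w s(u, v) = c) :
    hafnian w (insert d T) = if Odd #T then 1 else 0 := by
  have hexpand : hafnian w (insert d T) = ∑ b ∈ T, hafnian w (T.erase b) := by
    rw [hafnian_insert w hd]
    exact sum_congr rfl fun b hb => by rw [hw_d b hb, one_mul]
  rw [hexpand]
  have hcases : #T = 0 ∨ #T = 1 ∨ #T = 2 ∨ #T = 3 := by lia
  rcases hcases with h0 | h1 | h2 | h3
  · simp [card_eq_zero.1 h0]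
  · obtain ⟨a, rfl⟩ := card_eq_one.1 h1
    simp
  · rw [h2, if_neg (by decide)]
    refine sum_eq_zero fun b hb => ?_
    obtain ⟨a, ha⟩ := card_eq_one.1 (show #(T.erase b) = 1 by rw [card_erase_of_mem hb, h2])
    rw [ha, hafnian_singleton]
  · have hrest : ∀ b ∈ T, hafnian w (T.erase b) = c := fun b hb => by
      obtain ⟨u, v, huv, h⟩ := card_eq_two.1
        (show #(T.erase b) = 2 by rw [card_erase_of_mem hb, h3])
      have hu : u ∈ T := mem_of_mem_erase (h ▸ mem_insert_self u {v} : u ∈ T.erase b)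
      have hv : v ∈ T := mem_of_mem_erase (h ▸ by simp : v ∈ T.erase b)
      rw [h, hafnian_pair w huv, hw_T u hu v hv huv]
    rw [sum_congr rfl hrest, sum_const, h3, if_pos (by decide), nsmul_eq_mul, Nat.cast_ofNat, hc]

end CommSemiring

end Hafnian

section Factorization

lemma sum_powerset_union_biUnion_filter_inter_eq {α ι M : Type*} [DecidableEq α] [Fintype ι]
    [DecidableEq ι] [AddCommMonoid M] {F : Finset α} {B : ι → Finset α}
    (hFB : ∀ i, Disjoint F (B i)) (hB : Pairwise fun i j => Disjoint (B i) (B j))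
    {z : Finset α} (hz : z ⊆ F) (g : Finset α → M) :
    ∑ y ∈ (F ∪ univ.biUnion B).powerset with y ∩ F = z, g y =
      ∑ y ∈ Fintype.piFinset fun i => (B i).powerset, g (z ∪ univ.biUnion y) := by
  have hglue : ∀ y ∈ {y ∈ (F ∪ univ.biUnion B).powerset | y ∩ F = z},
      z ∪ univ.biUnion (fun i => y ∩ B i) = y := by
    intro y hy
    obtain ⟨hsub, rfl⟩ := mem_filter.1 hy
    rw [← inter_biUnion, ← inter_union_distrib_left, inter_eq_left.2 (mem_powerset.1 hsub)]
  refine sum_nbij' (fun y i => y ∩ B i) (fun y => z ∪ univ.biUnion y) ?_ ?_ hglue ?_ ?_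
  · exact fun y _ => Fintype.mem_piFinset.2 fun i => mem_powerset.2 inter_subset_right
  · intro y hy
    have hyB : ∀ i, y i ⊆ B i := fun i => mem_powerset.1 (Fintype.mem_piFinset.1 hy i)
    have hdisj : univ.biUnion y ∩ F = ∅ := by
      rw [← disjoint_iff_inter_eq_empty, disjoint_biUnion_left]
      exact fun i _ => (hFB i).symm.mono_left (hyB i)
    refine mem_filter.2 ⟨mem_powerset.2 ?_, ?_⟩
    · exact union_subset_union hz (biUnion_mono fun i _ => hyB i)
    · rw [union_inter_distrib_right, hdisj, union_empty, inter_eq_left.2 hz]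
  · intro y hy
    have hyB : ∀ i, y i ⊆ B i := fun i => mem_powerset.1 (Fintype.mem_piFinset.1 hy i)
    funext i
    ext e
    have hF : e ∈ z → e ∉ B i := fun he => disjoint_left.1 (hFB i) (hz he)
    have hdisj : ∀ j, e ∈ y j → e ∈ B i → j = i := fun j hj hi => by
      by_contra hji
      exact disjoint_left.1 (hB hji) (hyB j hj) hi
    simp only [mem_inter, mem_union, mem_biUnion, mem_univ, true_and]
    grind
  · exact fun y hy => congrArg g (hglue y hy).symm

variable {W ι : Type*} [DecidableEq W] [Fintype ι]

lemma degU7_biUnion_of_mem {A : ι → Finset W} (hA : Pairwise fun i j => Disjoint (A i) (A j))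
    {y : ι → Finset (Sym2 W)} (hy : ∀ i, y i ⊆ completeEdges (A i)) {i : ι} {v : W}
    (hv : v ∈ A i) : degU7 (univ.biUnion y) v = degU7 (y i) v := by
  rw [degU7, degU7]
  congr 1
  ext e
  simp only [mem_filter, mem_biUnion, mem_univ, true_and, and_congr_left_iff]
  refine fun hve => ⟨fun ⟨j, hj⟩ => ?_, fun he => ⟨i, he⟩⟩
  have hij : j = i := by
    by_contra hji
    exact disjoint_left.1 (hA hji) ((mem_completeEdges.1 (hy j hj)).1 v hve) hv
  exact hij ▸ hj

lemma mem_perfectMatchings_filter_degU7_eq_zero {A : Finset W} {y z : Finset (Sym2 W)}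
    (hy : y ⊆ completeEdges A) (hz : ∀ v ∈ A, degU7 z v ≤ 1) :
    y ∈ perfectMatchings {v ∈ A | degU7 z v = 0} ↔ ∀ v ∈ A, degU7 z v + degU7 y v = 1 := by
  have hdiag : ∀ e ∈ y, ¬ e.IsDiag := fun e he => (mem_completeEdges.1 (hy he)).2
  rw [mem_perfectMatchings, and_iff_right hdiag]
  refine forall_congr' fun v => ?_
  by_cases hv : v ∈ A
  · have hzv := hz v hv
    simp only [mem_filter, hv, true_and, forall_const]
    split_ifs <;> lia
  · simp [hv, degU7_eq_zero_of_subset_completeEdges hy hv]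

lemma wPerMat7_union_biUnion {A : ι → Finset W} (hA : Pairwise fun i j => Disjoint (A i) (A j))
    {z : Finset (Sym2 W)} (hzA : ∀ i, Disjoint z (completeEdges (A i)))
    (hz : ∀ i, ∀ v ∈ A i, degU7 z v ≤ 1) {y : ι → Finset (Sym2 W)}
    (hy : ∀ i, y i ⊆ completeEdges (A i)) (w : Sym2 W → ℝ) :
    wPerMat7 (univ.biUnion A) w (z ∪ univ.biUnion y) =
      (∏ e ∈ z, w e) *
        ∏ i, if y i ∈ perfectMatchings {v ∈ A i | degU7 z v = 0} then ∏ e ∈ y i, w e else 0 := by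
  have hdisj : Disjoint z (univ.biUnion y) :=
    disjoint_biUnion_right _ _ _ |>.2 fun i _ => (hzA i).mono_right (hy i)
  have hpair : (↑(univ : Finset ι) : Set ι).PairwiseDisjoint y := fun i _ j _ hij =>
    (disjoint_completeEdges (hA hij)).mono (hy i) (hy j)
  have hcond : (∀ v ∈ univ.biUnion A, degU7 (z ∪ univ.biUnion y) v = 1) ↔
      ∀ i, y i ∈ perfectMatchings {v ∈ A i | degU7 z v = 0} := by
    simp only [mem_biUnion, mem_univ, true_and, forall_exists_index, degU7_union hdisj]
    rw [forall_comm]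
    refine forall_congr' fun i => ?_
    rw [mem_perfectMatchings_filter_degU7_eq_zero (hy i) (hz i)]
    exact forall₂_congr fun v hv => by rw [degU7_biUnion_of_mem hA hy hv]
  rw [wPerMat7, prod_union hdisj, prod_biUnion hpair, Fintype.prod_ite_zero, mul_ite, mul_zero]
  simp only [hcond]

lemma sum_powerset_completeEdges_eq_hafnian {K : Type*} [CommSemiring K] (w : Sym2 W → K)
    {A R : Finset W} (hRA : R ⊆ A) :
    ∑ y ∈ (completeEdges A).powerset, (if y ∈ perfectMatchings R then ∏ e ∈ y, w e else 0) =
      hafnian w R := by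
  have hsub : perfectMatchings R ⊆ (completeEdges A).powerset :=
    (filter_subset _ _).trans (powerset_mono.2 (completeEdges_mono hRA))
  rw [← sum_filter, filter_mem_eq_inter, inter_eq_right.2 hsub, hafnian]

theorem sum_wPerMat7_filter_inter_eq {A : ι → Finset W}
    (hA : Pairwise fun i j => Disjoint (A i) (A j)) {F z : Finset (Sym2 W)}
    (hFA : ∀ i, Disjoint F (completeEdges (A i))) (hzF : z ⊆ F)
    (hz : ∀ i, ∀ v ∈ A i, degU7 z v ≤ 1) (w : Sym2 W → ℝ) :
    ∑ y ∈ (F ∪ univ.biUnion fun i => completeEdges (A i)).powerset with y ∩ F = z,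
        wPerMat7 (univ.biUnion A) w y =
      (∏ e ∈ z, w e) * ∏ i, hafnian w {v ∈ A i | degU7 z v = 0} := by
  classical
  have hfactor : ∀ i, hafnian w {v ∈ A i | degU7 z v = 0} =
      ∑ y ∈ (completeEdges (A i)).powerset,
        if y ∈ perfectMatchings {v ∈ A i | degU7 z v = 0} then ∏ e ∈ y, w e else 0 :=
    fun i => (sum_powerset_completeEdges_eq_hafnian w (filter_subset _ _)).symm
  rw [sum_powerset_union_biUnion_filter_inter_eq hFA
    (fun i j hij => disjoint_completeEdges (hA hij)) hzF]
  simp only [hfactor]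
  rw [prod_univ_sum, mul_sum]
  refine sum_congr rfl fun y hy => ?_
  exact wPerMat7_union_biUnion hA (fun i => (hFA i).mono_left hzF) hz
    (fun i => mem_powerset.1 (Fintype.mem_piFinset.1 hy i)) w

end Factorization

section Gadget

variable {V : Type*}

@[simp]
lemma phi7_mk (a b : V) : phi7 s(a, b) = s(Sum.inr (a, b), Sum.inr (b, a)) := rfl

lemma phi7_injective : Function.Injective (phi7 (V := V)) := by
  intro e e' h
  induction e with | _ a b =>
  induction e' with | _ c d =>
  simp only [phi7_mk, Sym2.eq_iff, Sum.inr.injEq, Prod.mk.injEq] at h ⊢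
  tauto

lemma inl_notMem_phi7 (i : V) (e : Sym2 V) : Sum.inl i ∉ phi7 e := by
  induction e with | _ a b => simp

lemma inr_mem_phi7 {i j : V} {e : Sym2 V} : Sum.inr (i, j) ∈ phi7 e ↔ e = s(i, j) := by
  induction e with | _ a b =>
  simp only [phi7_mk, Sym2.mem_iff, Sum.inr.injEq, Prod.mk.injEq, Sym2.eq_iff]
  tauto

variable [DecidableEq V]

lemma degU7_image_phi7_inl (x : Finset (Sym2 V)) (i : V) :
    degU7 (x.image phi7) (Sum.inl i) = 0 := by
  rw [degU7, card_eq_zero, filter_eq_empty_iff]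
  exact forall_mem_image.2 fun e _ => inl_notMem_phi7 i e

lemma degU7_image_phi7_inr (x : Finset (Sym2 V)) (i j : V) :
    degU7 (x.image phi7) (Sum.inr (i, j)) = if s(i, j) ∈ x then 1 else 0 := by
  rw [degU7, filter_image, card_image_of_injective _ phi7_injective]
  simp only [inr_mem_phi7, filter_eq']
  split_ifs <;> rfl

lemma degU7_image_phi7_le_one (x : Finset (Sym2 V)) (v : V ⊕ V × V) :
    degU7 (x.image phi7) v ≤ 1 := by
  rcases v with i | ⟨i, j⟩
  · rw [degU7_image_phi7_inl]
    exact zero_le_one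
  · rw [degU7_image_phi7_inr]
    split_ifs <;> decide

lemma filter_phi7_mem_eq_iff {E x : Finset (Sym2 V)} {x' : Finset (Sym2 (V ⊕ V × V))} :
    {e ∈ E | phi7 e ∈ x'} = x ↔ x' ∩ E.image phi7 = x.image phi7 := by
  rw [inter_comm, ← filter_mem_eq_inter, filter_image, (image_injective phi7_injective).eq_iff]

variable [Fintype V] {E : Finset (Sym2 V)}

lemma gadgetEdges7_eq_completeEdges (i : V) :
    gadgetEdges7 E i = completeEdges (gadgetVerts7 E i) := by
  ext e
  induction e with | _ a b =>
  simp only [gadgetEdges7, mem_completeEdges, mem_image, mem_filter, mem_product, Prod.exists,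
    Sym2.eq_iff, Sym2.mk_isDiag_iff, Sym2.mem_iff, forall_eq_or_imp, forall_eq]
  grind

lemma disjoint_gadgetVerts7 {i j : V} (hij : i ≠ j) :
    Disjoint (gadgetVerts7 E i) (gadgetVerts7 E j) := by
  simp only [gadgetVerts7, disjoint_left, mem_insert, mem_image]
  grind

lemma disjoint_image_phi7_completeEdges (hE : ∀ e ∈ E, ¬ e.IsDiag) (i : V) :
    Disjoint (E.image phi7) (completeEdges (gadgetVerts7 E i)) := by
  refine disjoint_left.2 (forall_mem_image.2 fun e he hi => ?_)
  induction e with | _ a b =>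
  have hmem := (mem_completeEdges.1 hi).1
  have hfst : ∀ u v : V, Sum.inr (u, v) ∈ gadgetVerts7 E i → i = u := by
    simp only [gadgetVerts7, mem_insert, mem_image]
    grind
  have ha : i = a := hfst a b (hmem _ (Sym2.mem_mk_left _ _))
  have hb : i = b := hfst b a (hmem _ (Sym2.mem_mk_right _ _))
  exact hE _ he (Sym2.mk_isDiag_iff.2 (ha.symm.trans hb))

lemma gadgetVerts7_filter_degU7_image_phi7_eq_zero (x : Finset (Sym2 V)) (i : V) :
    {v ∈ gadgetVerts7 E i | degU7 (x.image phi7) v = 0} = gadgetVerts7 (E \ x) i := by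
  ext (k | ⟨k, j⟩)
  · simp [gadgetVerts7, degU7_image_phi7_inl]
  · simp only [gadgetVerts7, degU7_image_phi7_inr, mem_filter, mem_insert, mem_image, mem_univ,
      mem_sdiff]
    grind

lemma hafnian_gadgetVerts7 {i : V} (hdeg : degU7 E i ≤ 3) {K : Type*} [CommSemiring K]
    {w : Sym2 (V ⊕ V × V) → K} {c : K} (hc : 3 * c = 1)
    (hw_inl : ∀ j, s(i, j) ∈ E → w s(Sum.inl i, Sum.inr (i, j)) = 1)
    (hw_inr : ∀ j k, s(i, j) ∈ E → s(i, k) ∈ E → j ≠ k →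
      w s(Sum.inr (i, j), Sum.inr (i, k)) = c) :
    hafnian w (gadgetVerts7 E i) = if Odd (degU7 E i) then 1 else 0 := by
  have hinj : Function.Injective fun j : V => (Sum.inr (i, j) : V ⊕ V × V) := fun a b h => by
    simpa using h
  have hcard : #(image (fun j => (Sum.inr (i, j) : V ⊕ V × V)) {j | s(i, j) ∈ E}) =
      degU7 E i := by
    rw [card_image_of_injective _ hinj, degU7_eq_card_neighbors]
  rw [gadgetVerts7, ← hcard]
  refine hafnian_insert_of_card_le_three (by simp) (hcard.trans_le hdeg) hc ?_ ?_
  · simpa using hw_inl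
  · simp only [forall_mem_image, mem_filter, mem_univ, true_and]
    exact fun j hj k hk hjk => hw_inr j k hj hk fun h => hjk (h ▸ rfl)

lemma wSubs7_zero (lam : Sym2 V → ℝ) (x : Finset (Sym2 V)) :
    wSubs7 lam (fun _ => 0) x =
      (∏ e ∈ x, lam e) * ∏ i, if Even (degU7 x i) then (1 : ℝ) else 0 := by
  rw [wSubs7, prod_filter]
  simp only [← Nat.not_even_iff_odd, ite_not]

lemma sum_wPerMat7_filter_phi7 (hE : ∀ e ∈ E, ¬ e.IsDiag)
    (hdeg : ∀ i, degU7 E i = 1 ∨ degU7 E i = 3) {w : Sym2 (V ⊕ V × V) → ℝ}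
    (hw_inl : ∀ i j, s(i, j) ∈ E → w s(Sum.inl i, Sum.inr (i, j)) = 1)
    (hw_inr : ∀ i j k, s(i, j) ∈ E → s(i, k) ∈ E → j ≠ k →
      w s(Sum.inr (i, j), Sum.inr (i, k)) = 1 / 3)
    {x : Finset (Sym2 V)} (hx : x ⊆ E) :
    ∑ x' ∈ (E.image phi7 ∪ univ.biUnion (gadgetEdges7 E)).powerset with
        {e ∈ E | phi7 e ∈ x'} = x, wPerMat7 (univ.biUnion (gadgetVerts7 E)) w x' =
      wSubs7 (fun e => w (phi7 e)) (fun _ => 0) x := by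
  have hsplit : ∀ i, degU7 x i + degU7 (E \ x) i = degU7 E i := fun i => by
    rw [← degU7_union disjoint_sdiff, union_sdiff_of_subset hx]
  have hgadget : ∀ i, hafnian w (gadgetVerts7 (E \ x) i) =
      if Even (degU7 x i) then 1 else 0 := fun i => by
    have hle : degU7 (E \ x) i ≤ 3 := by grind
    have hparity : Odd (degU7 (E \ x) i) ↔ Even (degU7 x i) := by grind
    rw [hafnian_gadgetVerts7 hle (c := 1 / 3) (by norm_num)
      (fun j hj => hw_inl i j (mem_sdiff.1 hj).1)
      (fun j k hj hk => hw_inr i j k (mem_sdiff.1 hj).1 (mem_sdiff.1 hk).1)]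
    simp only [hparity]
  simp only [filter_phi7_mem_eq_iff, funext (gadgetEdges7_eq_completeEdges (E := E))]
  rw [sum_wPerMat7_filter_inter_eq (fun _ _ => disjoint_gadgetVerts7)
    (disjoint_image_phi7_completeEdges hE) (image_subset_image hx)
    (fun _ v _ => degU7_image_phi7_le_one x v), wSubs7_zero, prod_image phi7_injective.injOn]
  simp only [gadgetVerts7_filter_degU7_image_phi7_eq_zero, hgadget]

lemma biUnion_gadgetVerts7 :
    univ.biUnion (gadgetVerts7 E) =
      univ.image Sum.inl ∪ image Sum.inr {p : V × V | s(p.1, p.2) ∈ E} := by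
  ext (i | ⟨i, j⟩) <;> simp [gadgetVerts7]

end Gadget

theorem stmt7_general {V : Type*} [Fintype V] [DecidableEq V]
    (E : Finset (Sym2 V)) (hE : ∀ e ∈ E, ¬ e.IsDiag)
    (hdeg : ∀ v : V, degU7 E v = 1 ∨ degU7 E v = 3)
    (lam : Sym2 V → ℝ)
    (E' : Finset (Sym2 (V ⊕ V × V)))
    (hE'def : E' = E.image phi7 ∪ univ.biUnion (gadgetEdges7 E))
    (VS : Finset (V ⊕ V × V))
    (hVS : VS = univ.image Sum.inl ∪ image Sum.inr {p : V × V | s(p.1, p.2) ∈ E})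
    (lam' : Sym2 (V ⊕ V × V) → ℝ)
    (hlam'1 : ∀ e ∈ E, lam' (phi7 e) = lam e)
    (hlam'2 : ∀ i j : V, s(i, j) ∈ E → lam' s(Sum.inl i, Sum.inr (i, j)) = 1)
    (hlam'3 : ∀ i j k : V, s(i, j) ∈ E → s(i, k) ∈ E → j ≠ k →
      lam' s(Sum.inr (i, j), Sum.inr (i, k)) = 1 / 3)
    (hZ' : ∑ y' ∈ E'.powerset, wPerMat7 VS lam' y' ≠ 0) :
    ∑ y ∈ E.powerset, wSubs7 lam (fun _ => 0) y ≠ 0 ∧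
    ∀ x ∈ E.powerset,
      (∑ x' ∈ E'.powerset with {e ∈ E | phi7 e ∈ x'} = x, wPerMat7 VS lam' x') /
        (∑ y' ∈ E'.powerset, wPerMat7 VS lam' y') =
      wSubs7 lam (fun _ => 0) x / ∑ y ∈ E.powerset, wSubs7 lam (fun _ => 0) y := by
  subst hE'def hVS
  rw [← biUnion_gadgetVerts7] at hZ' ⊢
  have hfiber : ∀ x ∈ E.powerset,
      ∑ x' ∈ (E.image phi7 ∪ univ.biUnion (gadgetEdges7 E)).powerset with
        {e ∈ E | phi7 e ∈ x'} = x, wPerMat7 (univ.biUnion (gadgetVerts7 E)) lam' x' =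
      wSubs7 lam (fun _ => 0) x := fun x hx => by
    rw [mem_powerset] at hx
    rw [sum_wPerMat7_filter_phi7 hE hdeg hlam'2 hlam'3 hx, wSubs7, wSubs7,
      prod_congr rfl fun e he => hlam'1 e (hx he)]
  have htotal : ∑ y ∈ E.powerset, wSubs7 lam (fun _ => 0) y =
      ∑ y' ∈ (E.image phi7 ∪ univ.biUnion (gadgetEdges7 E)).powerset,
        wPerMat7 (univ.biUnion (gadgetVerts7 E)) lam' y' := by
    rw [← sum_congr rfl hfiber]
    exact sum_fiberwise_of_maps_to (fun _ _ => mem_powerset.2 (filter_subset _ _)) _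
  exact ⟨htotal ▸ hZ', fun x hx => by rw [hfiber x hx, htotal]⟩

/-- Reduction of the zero-field subgraphs world on a cubic graph
to weighted perfect matchings.  Each node `i` of the cubic graph `G = (V,E)`
is replaced by the complete-graph gadget on `A_i`, internal edges
`{d_i,v_{ij}}` get weight `1`, edges `{v_{ij},v_{ik}}` get weight `1/3`,
and `{v_{ij},v_{ji}}` gets weight `λ({i,j})`.  The pushforward of the
perfect-matching distribution on `G'` under `x' ↦ x' ∘ φ` equals the
subgraphs-world distribution on `G` with parameters `λ` and `μ ≡ 0`. -/
theorem stmt7 {V : Type*} [Fintype V] [DecidableEq V]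
    (E : Finset (Sym2 V)) (hE : ∀ e ∈ E, ¬ e.IsDiag)
    (hcubic : ∀ v : V, (E.filter (fun e => v ∈ e)).card = 3)
    (lam : Sym2 V → ℝ) (hlam : ∀ e ∈ E, lam e ∈ Set.Icc (0 : ℝ) 1)
    -- the new edge set
    (E' : Finset (Sym2 (V ⊕ V × V)))
    (hE'def : E' = E.image phi7 ∪ Finset.univ.biUnion (gadgetEdges7 E))
    -- the new vertex set
    (VS : Finset (V ⊕ V × V))
    (hVS : VS = (Finset.univ : Finset V).image Sum.inl ∪
      ((Finset.univ : Finset (V × V)).filter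
        (fun p => s(p.1, p.2) ∈ E)).image Sum.inr)
    -- the new edge weights
    (lam' : Sym2 (V ⊕ V × V) → ℝ)
    (hlam'1 : ∀ e ∈ E, lam' (phi7 e) = lam e)
    (hlam'2 : ∀ i j : V, s(i, j) ∈ E →
      lam' s(Sum.inl i, Sum.inr (i, j)) = 1)
    (hlam'3 : ∀ i j k : V, s(i, j) ∈ E → s(i, k) ∈ E → j ≠ k →
      lam' s(Sum.inr (i, j), Sum.inr (i, k)) = 1 / 3)
    -- the partition function of the perfect-matching model is positive
    (hZ' : 0 < ∑ y' ∈ E'.powerset, wPerMat7 VS lam' y') :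
    ∀ x ∈ E.powerset,
      (∑ x' ∈ E'.powerset.filter
            (fun x' => E.filter (fun e => phi7 e ∈ x') = x),
          wPerMat7 VS lam' x') /
        (∑ y' ∈ E'.powerset, wPerMat7 VS lam' y')
      = wSubs7 lam (fun _ => 0) x /
        (∑ y ∈ E.powerset, wSubs7 lam (fun _ => 0) y) := by
  exact (stmt7_general E hE (fun v => Or.inr (hcubic v)) lam E' hE'def VS hVS lam' hlam'1 hlam'2
    hlam'3 hZ'.ne').2
end

section
/- For all real numbers μ and λ with 0 < μ ≤ 1 and 0 < λ ≤ 3μ^{-2}, the quantity κ = −2 / ln(1 − 2/(√(1+3λ) + 1)) satisfies κ < 3.06·μ^{-1}. -/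
/-!
With `s = √(1 + 3λ)` the exponent is `κ = 1 / artanh s⁻¹`. Comparing the series
`artanh x = ∑ x ^ (2k + 1) / (2k + 1)` termwise with `∑ x ^ (2k + 1) / 3 ^ k = x / (1 - x ^ 2 / 3)`
gives `κ ≤ s - 1 / (3s)`, which settles the case `s < 3` since `μ⁻¹ ≥ 1`. For `s ≥ 3` the square of
this bound is `s ^ 2 - 2/3 + 1 / (9s ^ 2) ≤ 9μ⁻² + 1/3 + 1/81`, and the constant is absorbed
by `(3.06 ^ 2 - 9)μ⁻² ≥ 0.3636`.
-/

open Real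

theorem hasSum_artanh {x : ℝ} (hx : |x| < 1) :
    HasSum (fun k : ℕ => x ^ (2 * k + 1) / (2 * k + 1)) (artanh x) := by
  obtain ⟨hx_gt, hx_lt⟩ := abs_lt.1 hx
  have h := (hasSum_log_sub_log_of_abs_lt_one hx).mul_left (1 / 2)
  rw [← log_div (by linarith) (by linarith), ← artanh_eq_half_log ⟨hx_gt.le, hx_lt.le⟩] at h
  exact h.congr_fun fun k => by ring

theorem hasSum_pow_two_mul_add_one_div_three_pow {x : ℝ} (hx : x ^ 2 < 3) :
    HasSum (fun k : ℕ => x ^ (2 * k + 1) / 3 ^ k) (x / (1 - x ^ 2 / 3)) := by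
  have h := (hasSum_geometric_of_lt_one (by positivity : 0 ≤ x ^ 2 / 3) (by linarith)).mul_left x
  rw [← div_eq_mul_inv] at h
  exact h.congr_fun fun k => by rw [div_pow, ← pow_mul]; ring

theorem two_mul_add_one_le_three_pow (k : ℕ) : (2 * k + 1 : ℝ) ≤ 3 ^ k :=
  calc (2 * k + 1 : ℝ) = 1 + k * 2 := by ring
    _ ≤ (1 + 2) ^ k := one_add_mul_le_pow (by norm_num) k
    _ = 3 ^ k := by norm_num

theorem div_one_sub_sq_div_three_le_artanh {x : ℝ} (hx0 : 0 ≤ x) (hx1 : x < 1) :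
    x / (1 - x ^ 2 / 3) ≤ artanh x := by
  refine hasSum_le (fun k => ?_) (hasSum_pow_two_mul_add_one_div_three_pow (by nlinarith))
    (hasSum_artanh (by rwa [abs_of_nonneg hx0]))
  gcongr
  exact two_mul_add_one_le_three_pow k

theorem log_one_sub_two_div_add_one {s : ℝ} (hs : 1 < |s|) :
    log (1 - 2 / (s + 1)) = -2 * artanh s⁻¹ := by
  have hs0 : s ≠ 0 := by rintro rfl; norm_num at hs
  have hs1 : s + 1 ≠ 0 := fun h => by simp [eq_neg_of_add_eq_zero_left h] at hs
  have hs_inv : |s⁻¹| ≤ 1 := by rw [abs_inv]; exact inv_le_one_of_one_le₀ hs.le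
  have hfrac : 1 - 2 / (s + 1) = ((1 + s⁻¹) / (1 - s⁻¹))⁻¹ := by
    rw [inv_div]
    field_simp
    ring
  rw [hfrac, log_inv, artanh_eq_half_log (abs_le.1 hs_inv)]
  ring

theorem neg_two_div_log_one_sub_two_div_add_one_le {s : ℝ} (hs : 1 < s) :
    -2 / log (1 - 2 / (s + 1)) ≤ s - (3 * s)⁻¹ := by
  have hs0 : 0 < s := by linarith
  have hinv : s⁻¹ / (1 - s⁻¹ ^ 2 / 3) = (s - (3 * s)⁻¹)⁻¹ := by
    rw [← inv_inj, inv_inv, inv_div]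
    field_simp
  have hbound_pos : 0 < s - (3 * s)⁻¹ := by
    rw [sub_pos, inv_lt_iff_one_lt_mul₀ (by positivity)]
    nlinarith
  have hartanh : (s - (3 * s)⁻¹)⁻¹ ≤ artanh s⁻¹ :=
    hinv ▸ div_one_sub_sq_div_three_le_artanh (inv_nonneg.2 hs0.le) (inv_lt_one_of_one_lt₀ hs)
  calc -2 / log (1 - 2 / (s + 1))
      = (artanh s⁻¹)⁻¹ := by
        rw [log_one_sub_two_div_add_one (hs.trans_le (le_abs_self s)),
          div_mul_cancel_left₀ (by norm_num)]
    _ ≤ s - (3 * s)⁻¹ := inv_le_of_inv_le₀ hbound_pos hartanh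

theorem sub_inv_three_mul_lt {s t : ℝ} (hs : 0 < s) (ht : 1 ≤ t) (hst : s ^ 2 ≤ 1 + 9 * t ^ 2) :
    s - (3 * s)⁻¹ < 3.06 * t := by
  by_contra! h
  have hinv_pos : 0 < (3 * s)⁻¹ := by positivity
  have hs_ge : 9 ≤ 3 * s := by linarith
  have hinv_le : (3 * s)⁻¹ ≤ 9⁻¹ := inv_anti₀ (by norm_num) hs_ge
  have hsq : (s - (3 * s)⁻¹) ^ 2 = s ^ 2 - 2 / 3 + (3 * s)⁻¹ ^ 2 := by
    field_simp
    ring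
  have hlower : (3.06 * t) ^ 2 ≤ (s - (3 * s)⁻¹) ^ 2 := by gcongr
  have hinv_sq : (3 * s)⁻¹ ^ 2 ≤ 9⁻¹ ^ 2 := by gcongr
  have ht_sq : 1 ≤ t ^ 2 := one_le_pow₀ ht
  rw [hsq] at hlower
  linarith

/-- For all reals `μ, λ` with `0 < μ ≤ 1` and `0 < λ ≤ 3μ⁻²`,
the quantity `κ = −2 / ln(1 − 2/(√(1+3λ) + 1))` satisfies `κ < 3.06·μ⁻¹`. -/
theorem stmt15 (μ lam : ℝ) (hμ0 : 0 < μ) (hμ1 : μ ≤ 1)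
    (hlam0 : 0 < lam) (hlam : lam ≤ 3 * (μ ^ 2)⁻¹) :
    -2 / Real.log (1 - 2 / (Real.sqrt (1 + 3 * lam) + 1)) < 3.06 * μ⁻¹ := by
  have hs : 1 < √(1 + 3 * lam) := lt_sqrt_of_sq_lt (by linarith)
  have hsq : √(1 + 3 * lam) ^ 2 ≤ 1 + 9 * μ⁻¹ ^ 2 := by
    rw [sq_sqrt (by linarith), inv_pow]
    linarith
  exact (neg_two_div_log_one_sub_two_div_add_one_le hs).trans_lt
    (sub_inv_three_mul_lt (by linarith) ((one_le_inv₀ hμ0).2 hμ1) hsq)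
end
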